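/- arXiv:2112.12081 — 2 statements merged into one kernel-verified Lean document; each statement's English description precedes it below -/
import Mathlib

section
/- For every real q with 0 < q < 1, writing t = R(q): 1/√t − β·√t = q^{−1/10} · √(f(−q)/f(−q⁵)) · ∏_{n=1}^∞ 1/(1 + β·q^{n/5} + q^{2n/5}). -/
/-!
Put `y = q^{1/10}`, `x = y² = q^{1/5}`, and write `L r = ∏_{n ≥ 0} (1 - q^{5n+r})`.

The engine is the Jacobi triple product (`jacobi_triple`), obtained from its finite form, which is
the Gaussian binomial theorem recentred, by dominated convergence. It is used in three ways.

* Euler's pentagonal number theorem (`fneg_sq`): `f(-q) = ∏ (1 - q^n) = L 1 * ⋯ * L 5` and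
  `f(-q⁵) = L 5`.
* `A = ∑ (-1)^m q^{m(5m-1)/2} = L 5 * L 2 * L 3` and `B = ∑ (-1)^m q^{m(5m+3)/2} = L 5 * L 1 * L 4`
  (`theta_eq_apProd`), so that `t = R(q) = x * B / A`.
* At a fifth root of unity `z` with `z² + α z + 1 = 0`, the product side is
  `(1 - z) ∏ (1 - x^n) (1 + α x^n + x^{2n})`, while splitting the series side by residues modulo `5`
  gives `(1 - z) (A + (z² + z³) x B)` with `z² + z³ = -β`. Hence
  `∏ (1 - x^n) (1 + α x^n + x^{2n}) = A - β x B = A (1 - β t)` (`apProd_mul_quadProd_alpha`).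

Since `(1 - X) (1 + α X + X²) (1 + β X + X²) = 1 - X⁵`, multiplying the last product by
`∏ (1 + β x^n + x^{2n})` gives `f(-q)` (`apProd_mul_quadProd`). Therefore
`A (1 - β t) ∏ (1 + β x^n + x^{2n}) = L 1 * ⋯ * L 5`, and the theorem follows on dividing by
`A √t`, because `A² t = x L₁ L₂ L₃ L₄ L₅²`.
-/

open Real

/-- The Rogers–Ramanujan continued fraction value, via its product expansion,
for real `q` with `0 < q < 1`. -/
noncomputable def rrcf (q : ℝ) : ℝ :=
  q ^ ((1 : ℝ)/5) *
    ∏' n : ℕ,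
      (1 - q ^ (5*(n+1) - 1)) * (1 - q ^ (5*(n+1) - 4)) /
      ((1 - q ^ (5*(n+1) - 2)) * (1 - q ^ (5*(n+1) - 3)))

/-- Jacobi's second theta function `θ₂(z; q)` for real `z` and `0 < q < 1`. -/
noncomputable def theta2 (z q : ℝ) : ℝ :=
  2 * ∑' n : ℕ, q ^ (((n : ℝ) + 1/2)^2) * Real.cos ((2*(n : ℝ) + 1) * z)

/-- Ramanujan's function `f(-q) = ∑_{n ∈ ℤ} (-1)^n q^{n(3n-1)/2}`. -/
noncomputable def fneg (q : ℝ) : ℝ :=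
  ∑' n : ℤ, (-1 : ℝ) ^ n * q ^ (n * (3*n - 1) / 2)

/-- The golden-ratio conjugate `α = (1 - √5)/2`. -/
noncomputable def alphaRR : ℝ := (1 - Real.sqrt 5) / 2

/-- The golden ratio `β = (1 + √5)/2`. -/
noncomputable def betaRR : ℝ := (1 + Real.sqrt 5) / 2

open Filter Topology

/-! ### The Gaussian binomial theorem -/

/-- The `q`-Pochhammer symbol `(x; x)_n = ∏_{k=1}^n (1 - x^k)`. -/
def qPoch {K : Type*} [Field K] (x : K) (n : ℕ) : K :=
  ∏ k ∈ Finset.range n, (1 - x ^ (k + 1))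

/-- The Gaussian binomial coefficient `[n; k]_x`, defined by the `q`-Pascal rule, so that it
vanishes for `k > n`. -/
def gaussBinom {K : Type*} [Field K] (x : K) : ℕ → ℕ → K
  | _, 0 => 1
  | 0, _ + 1 => 0
  | n + 1, k + 1 => gaussBinom x n (k + 1) + x ^ (n - k) * gaussBinom x n k

section Finite

variable {K : Type*} [Field K]

lemma gaussBinom_zero_right (x : K) (n : ℕ) : gaussBinom x n 0 = 1 := by
  cases n <;> rfl

lemma gaussBinom_succ_succ (x : K) (n k : ℕ) :
    gaussBinom x (n + 1) (k + 1) = gaussBinom x n (k + 1) + x ^ (n - k) * gaussBinom x n k := rfl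

lemma gaussBinom_of_lt (x : K) : ∀ n k : ℕ, n < k → gaussBinom x n k = 0
  | _, 0, h => absurd h (Nat.not_lt_zero _)
  | 0, _ + 1, _ => rfl
  | n + 1, k + 1, h => by
    rw [gaussBinom_succ_succ, gaussBinom_of_lt x n (k + 1) (by omega),
      gaussBinom_of_lt x n k (by omega)]
    simp

lemma qPoch_succ (x : K) (n : ℕ) : qPoch x (n + 1) = qPoch x n * (1 - x ^ (n + 1)) :=
  Finset.prod_range_succ _ _

lemma qPoch_zero (x : K) : qPoch x 0 = 1 := Finset.prod_range_zero _

lemma gaussBinom_mul_qPoch (x : K) : ∀ n k : ℕ, k ≤ n →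
    gaussBinom x n k * qPoch x k * qPoch x (n - k) = qPoch x n
  | n, 0, _ => by simp [gaussBinom_zero_right, qPoch_zero]
  | 0, k + 1, h => absurd h (by omega)
  | n + 1, k + 1, h => by
    have h2 := gaussBinom_mul_qPoch x n k (by omega)
    rw [gaussBinom_succ_succ, Nat.add_sub_add_right, qPoch_succ x n]
    rcases Nat.lt_or_ge k n with hk | hk
    · have h1 := gaussBinom_mul_qPoch x n (k + 1) hk
      obtain ⟨m, rfl⟩ : ∃ m, n = k + 1 + m := ⟨n - (k + 1), by omega⟩
      rw [show k + 1 + m - k = m + 1 by omega] at h2 ⊢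
      rw [show k + 1 + m - (k + 1) = m by omega] at h1
      have e1 := qPoch_succ x m
      have e2 := qPoch_succ x k
      calc _ = (1 - x ^ (m + 1)) * (gaussBinom x (k + 1 + m) (k + 1) * qPoch x (k + 1) * qPoch x m)
            + x ^ (m + 1) * (1 - x ^ (k + 1)) *
              (gaussBinom x (k + 1 + m) k * qPoch x k * qPoch x (m + 1)) := by
              rw [e1, e2]; ring
        _ = _ := by rw [h1, h2]; ring
    · obtain rfl : k = n := by omega
      rw [gaussBinom_of_lt x k (k + 1) (by omega)]
      simp only [Nat.sub_self, qPoch_zero, qPoch_succ] at h2 ⊢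
      linear_combination (1 - x ^ (k + 1)) * h2

/-- The Gaussian binomial theorem in base `y ^ 2`. -/
lemma gauss_binomial (y w : K) (hy : y ≠ 0) (n : ℕ) :
    ∏ k ∈ Finset.range n, (1 - w * (y ^ 2) ^ k) =
      ∑ i ∈ Finset.range (n + 1),
        (-1) ^ i * y ^ ((i : ℤ) * (i - 1)) * gaussBinom (y ^ 2) n i * w ^ i := by
  induction n with
  | zero => simp [gaussBinom_zero_right]
  | succ n ih =>
    rw [Finset.prod_range_succ, ih, Finset.sum_range_succ' _ (n + 1)]
    have e : ∑ i ∈ Finset.range (n + 1),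
        (-1) ^ i * y ^ ((i : ℤ) * (i - 1)) * gaussBinom (y ^ 2) n i * w ^ i =
        ∑ i ∈ Finset.range (n + 1), (-1) ^ (i + 1) * y ^ (((i + 1 : ℕ) : ℤ) * ((i + 1 : ℕ) - 1)) *
          gaussBinom (y ^ 2) n (i + 1) * w ^ (i + 1) + 1 := by
      have h1 := Finset.sum_range_succ (fun i : ℕ =>
        (-1) ^ i * y ^ ((i : ℤ) * (i - 1)) * gaussBinom (y ^ 2) n i * w ^ i) (n + 1)
      have h2 := Finset.sum_range_succ' (fun i : ℕ =>
        (-1) ^ i * y ^ ((i : ℤ) * (i - 1)) * gaussBinom (y ^ 2) n i * w ^ i) (n + 1)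
      rw [gaussBinom_of_lt _ n (n + 1) (by omega)] at h1
      simp only [gaussBinom_zero_right] at h2
      rw [h1] at h2
      simpa using h2
    rw [mul_sub, mul_one]
    nth_rewrite 1 [e]
    simp only [gaussBinom_succ_succ, gaussBinom_zero_right, mul_add, add_mul,
      Finset.sum_add_distrib]
    rw [Finset.sum_mul]
    have e3 : ∀ i ∈ Finset.range (n + 1),
        (-1) ^ i * y ^ ((i : ℤ) * (i - 1)) * gaussBinom (y ^ 2) n i * w ^ i * (w * (y ^ 2) ^ n) =
        - ((-1) ^ (i + 1) * y ^ (((i + 1 : ℕ) : ℤ) * ((i + 1 : ℕ) - 1)) *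
          ((y ^ 2) ^ (n - i) * gaussBinom (y ^ 2) n i) * w ^ (i + 1)) := by
      intro i hi
      obtain ⟨m, rfl⟩ : ∃ m, n = i + m := ⟨n - i, by grind⟩
      have : y ^ (((i + 1 : ℕ) : ℤ) * ((i + 1 : ℕ) - 1)) = y ^ ((i : ℤ) * (i - 1)) * (y ^ 2) ^ i := by
        rw [← pow_mul, ← zpow_natCast, ← zpow_add₀ hy]
        congr 1; push_cast; ring
      rw [this, Nat.add_sub_cancel_left]
      ring
    rw [Finset.sum_congr rfl e3, Finset.sum_neg_distrib]
    simp
    ring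

/-- The finite form of the Jacobi triple product: the Gaussian binomial theorem with `2 N` factors,
recentred at the middle term. -/
lemma finite_triple (y z : K) (hy : y ≠ 0) (hz : z ≠ 0) (N : ℕ) :
    ∏ k ∈ Finset.range N, ((1 - z * (y ^ 2) ^ k) * (1 - (y ^ 2) ^ (k + 1) / z)) =
      ∑ i ∈ Finset.range (2 * N + 1), (-1) ^ ((i : ℤ) - N) * z ^ ((i : ℤ) - N) *
        y ^ (((i : ℤ) - N) * ((i : ℤ) - N - 1)) * gaussBinom (y ^ 2) (2 * N) i := by
  have h := gauss_binomial y (z * y ^ (-2 * (N : ℤ))) hy (2 * N)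
  have hp : ∏ k ∈ Finset.range (2 * N), (1 - z * y ^ (-2 * (N : ℤ)) * (y ^ 2) ^ k) =
      (-1) ^ N * z ^ N * y ^ (-(N : ℤ) * (N + 1)) *
      ∏ k ∈ Finset.range N, ((1 - z * (y ^ 2) ^ k) * (1 - (y ^ 2) ^ (k + 1) / z)) := by
    rw [two_mul, Finset.prod_range_add, Finset.prod_mul_distrib, mul_comm]
    have e1 : ∀ k, 1 - z * y ^ (-2 * (N : ℤ)) * (y ^ 2) ^ (N + k) = 1 - z * (y ^ 2) ^ k := by
      intro k
      rw [pow_add, ← pow_mul y 2 N, ← zpow_natCast y (2 * N), mul_assoc, ← mul_assoc (y ^ _),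
        ← zpow_add₀ hy]
      simp
    simp only [e1]
    have e2 : ∏ k ∈ Finset.range N, (1 - z * y ^ (-2 * (N : ℤ)) * (y ^ 2) ^ k) =
        (-1) ^ N * z ^ N * y ^ (-(N : ℤ) * (N + 1)) *
          ∏ k ∈ Finset.range N, (1 - (y ^ 2) ^ (k + 1) / z) := by
      rw [← Finset.prod_range_reflect]
      have e3 : ∀ k ∈ Finset.range N, 1 - z * y ^ (-2 * (N : ℤ)) * (y ^ 2) ^ (N - 1 - k) =
          (-z * y ^ (-2 * ((k : ℤ) + 1))) * (1 - (y ^ 2) ^ (k + 1) / z) := by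
        intro k hk
        have hk' : k + 1 ≤ N := by simpa [Nat.succ_le_iff] using hk
        have a1 : y ^ (-2 * (N : ℤ)) * (y ^ 2) ^ (N - 1 - k) = y ^ (-2 * ((k : ℤ) + 1)) := by
          rw [← pow_mul, ← zpow_natCast, ← zpow_add₀ hy]
          congr 1
          push_cast [show N - 1 - k = N - (k + 1) by omega, Nat.cast_sub hk']
          ring
        have a2 : y ^ (-2 * ((k : ℤ) + 1)) * (y ^ 2) ^ (k + 1) = 1 := by
          rw [← pow_mul, ← zpow_natCast, ← zpow_add₀ hy]
          convert zpow_zero y using 2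
          push_cast; ring
        rw [mul_assoc, a1]
        field_simp
        linear_combination -a2
      rw [Finset.prod_congr rfl e3, Finset.prod_mul_distrib]
      congr 1
      clear e3 e1 h
      induction N with
      | zero => simp
      | succ N ih =>
        rw [Finset.prod_range_succ, ih]
        have : y ^ (-((N + 1 : ℕ) : ℤ) * ((N + 1 : ℕ) + 1)) =
            y ^ (-(N : ℤ) * (N + 1)) * y ^ (-2 * ((N : ℤ) + 1)) := by
          rw [← zpow_add₀ hy]; congr 1; push_cast; ring
        rw [this]; ring
    rw [e2]; ring
  rw [hp] at h
  have hc : (-1 : K) ^ N * z ^ N * y ^ (-(N : ℤ) * (N + 1)) ≠ 0 := by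
    exact mul_ne_zero (mul_ne_zero (by simp) (pow_ne_zero _ hz)) (zpow_ne_zero _ hy)
  apply mul_left_cancel₀ hc
  rw [h, Finset.mul_sum]
  refine Finset.sum_congr rfl fun i _ => ?_
  have a1 : z ^ ((i : ℤ) - N) * z ^ N = z ^ i := by
    rw [← zpow_natCast z N, ← zpow_add₀ hz, ← zpow_natCast]; congr 1; ring
  have a2 : (-1 : K) ^ ((i : ℤ) - N) * (-1) ^ N = (-1) ^ i := by
    have : (-1 : K) ≠ 0 := by simp
    rw [← zpow_natCast (-1 : K) N, ← zpow_add₀ this, ← zpow_natCast]; congr 1; ring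
  have a3 : y ^ ((i : ℤ) * (i - 1)) * (y ^ (-2 * (N : ℤ))) ^ i =
      y ^ (-(N : ℤ) * (N + 1)) * y ^ (((i : ℤ) - N) * ((i : ℤ) - N - 1)) := by
    rw [← zpow_natCast (y ^ (-2 * (N : ℤ))), ← zpow_mul, ← zpow_add₀ hy, ← zpow_add₀ hy]
    congr 1; ring
  rw [mul_pow, ← a1, ← a2]
  linear_combination ((-1 : K) ^ ((i : ℤ) - N) * (-1) ^ N) * (z ^ ((i : ℤ) - N) * z ^ N) *
    gaussBinom (y ^ 2) (2 * N) i * a3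

end Finite

/-! ### The Jacobi triple product -/

section Limit

variable {K : Type*} [NormedField K]

lemma one_sub_pow_ne_zero {x : K} (hx : ‖x‖ < 1) {n : ℕ} (hn : n ≠ 0) : 1 - x ^ n ≠ 0 := by
  intro h
  have h1 : ‖x ^ n‖ = 1 := by rw [← sub_eq_zero.mp h, norm_one]
  rw [norm_pow] at h1
  exact (pow_lt_one₀ (norm_nonneg x) hx hn).ne h1

lemma qPoch_ne_zero {x : K} (hx : ‖x‖ < 1) (n : ℕ) : qPoch x n ≠ 0 :=
  Finset.prod_ne_zero_iff.mpr fun _ _ => one_sub_pow_ne_zero hx (Nat.succ_ne_zero _)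

lemma gaussBinom_add {x : K} (hx : ‖x‖ < 1) (k m : ℕ) :
    gaussBinom x (k + m) k = qPoch x (k + m) * (qPoch x k)⁻¹ * (qPoch x m)⁻¹ := by
  have h := gaussBinom_mul_qPoch x (k + m) k (by omega)
  rw [Nat.add_sub_cancel_left] at h
  have h1 := qPoch_ne_zero hx k
  have h2 := qPoch_ne_zero hx m
  field_simp
  exact h

lemma exists_qPoch_tendsto [CompleteSpace K] {x : K} (hx : ‖x‖ < 1) :
    ∃ L : K, L ≠ 0 ∧ Tendsto (qPoch x) atTop (𝓝 L) := by
  have hs : Summable fun n : ℕ => ‖-x ^ (n + 1)‖ := by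
    simp only [norm_neg, norm_pow]
    exact (summable_nat_add_iff 1).mpr (summable_geometric_of_lt_one (norm_nonneg x) hx)
  refine ⟨∏' n : ℕ, (1 + -x ^ (n + 1)), tprod_one_add_ne_zero_of_summable (fun n => ?_) hs, ?_⟩
  · simpa [sub_eq_add_neg] using one_sub_pow_ne_zero hx (Nat.succ_ne_zero n)
  · refine (multipliable_one_add_of_summable hs).tendsto_prod_tprod_nat.congr fun n => ?_
    simp only [qPoch, sub_eq_add_neg]

lemma summable_pow_mul_gauss {y : K} (hy1 : ‖y‖ < 1) (hy : y ≠ 0) {z : K} (hz : z ≠ 0) :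
    Summable fun n : ℕ => ‖z ^ n * y ^ ((n : ℤ) * (n - 1))‖ := by
  refine summable_of_ratio_test_tendsto_lt_one (l := 0) one_pos
    (Eventually.of_forall fun n =>
      norm_ne_zero_iff.mpr (mul_ne_zero (pow_ne_zero _ hz) (zpow_ne_zero _ hy))) ?_
  simp only [norm_norm]
  have h : ∀ n : ℕ, ‖z ^ (n + 1) * y ^ (((n + 1 : ℕ) : ℤ) * ((n + 1 : ℕ) - 1))‖ /
      ‖z ^ n * y ^ ((n : ℤ) * (n - 1))‖ = ‖z‖ * (‖y‖ ^ 2) ^ n := by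
    intro n
    have e : y ^ (((n + 1 : ℕ) : ℤ) * ((n + 1 : ℕ) - 1)) = y ^ ((n : ℤ) * (n - 1)) * (y ^ 2) ^ n := by
      rw [← pow_mul, ← zpow_natCast, ← zpow_add₀ hy]; congr 1; push_cast; ring
    have := norm_ne_zero_iff.mpr (zpow_ne_zero ((n : ℤ) * (n - 1)) hy)
    have := norm_ne_zero_iff.mpr (pow_ne_zero n hz)
    rw [e, norm_mul, norm_mul, norm_mul, ← norm_pow, ← norm_pow, pow_succ, norm_mul]
    field_simp
  simp only [h]
  have := (tendsto_pow_atTop_nhds_zero_of_lt_one (by positivity : 0 ≤ ‖y‖ ^ 2)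
    (pow_lt_one₀ (norm_nonneg y) hy1 two_ne_zero)).const_mul ‖z‖
  simpa using this

/-- The general term `(-1)^j z^j y^{j(j-1)}` of the Jacobi theta series; with `x = y ^ 2` it equals
`(-1)^j z^j x^{j(j-1)/2}`, without a division in the exponent. -/
def thetaTerm (y z : K) (j : ℤ) : K := (-1) ^ j * z ^ j * y ^ (j * (j - 1))

lemma norm_thetaTerm (y z : K) (j : ℤ) : ‖thetaTerm y z j‖ = ‖z ^ j * y ^ (j * (j - 1))‖ := by
  simp [thetaTerm, norm_mul, norm_zpow]

lemma summable_thetaTerm {y : K} (hy1 : ‖y‖ < 1) (hy : y ≠ 0) {z : K} (hz : z ≠ 0) :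
    Summable fun j : ℤ => ‖thetaTerm y z j‖ := by
  simp only [norm_thetaTerm]
  apply Summable.of_nat_of_neg
  · simpa using summable_pow_mul_gauss hy1 hy hz
  · refine (summable_pow_mul_gauss hy1 hy
      (z := y ^ 2 / z) (div_ne_zero (pow_ne_zero _ hy) hz)).congr fun n => ?_
    congr 1
    rw [div_pow, div_eq_mul_inv, mul_comm (_ ^ n), mul_assoc, zpow_neg, zpow_natCast, ← pow_mul,
      ← zpow_natCast y, ← zpow_add₀ hy]
    congr 2; push_cast; ring

/-- The coefficient of `thetaTerm y z j` in the finite triple product. -/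
def tripleCoeff (x : K) (N : ℕ) (j : ℤ) : K :=
  if 0 ≤ j + N then gaussBinom x (2 * N) (j + N).toNat else 0

lemma finite_triple_tsum (y z : K) (hy : y ≠ 0) (hz : z ≠ 0) (N : ℕ) :
    ∏ k ∈ Finset.range N, ((1 - z * (y ^ 2) ^ k) * (1 - (y ^ 2) ^ (k + 1) / z)) =
      ∑' j : ℤ, thetaTerm y z j * tripleCoeff (y ^ 2) N j := by
  have hg : Function.Injective fun i : ℕ => (i : ℤ) - N := fun a b h => by
    simpa using h
  rw [finite_triple y z hy hz N, ← hg.tsum_eq, tsum_eq_sum (s := Finset.range (2 * N + 1))]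
  · refine Finset.sum_congr rfl fun i _ => ?_
    simp [thetaTerm, tripleCoeff]
  · intro i hi
    have : 2 * N < i := not_lt.mp (mt Finset.mem_range.mpr hi)
    simp [tripleCoeff, gaussBinom_of_lt _ _ _ this]
  · intro j hj
    by_cases h : 0 ≤ j + N
    · exact ⟨(j + N).toNat, by simp [Int.toNat_of_nonneg h]⟩
    · simp [tripleCoeff, h] at hj

lemma tripleCoeff_eq {x : K} (hx : ‖x‖ < 1) {N : ℕ} {j : ℤ} (h1 : 0 ≤ j + N) (h2 : j ≤ N) :
    tripleCoeff x N j =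
      qPoch x (2 * N) * (qPoch x (j + N).toNat)⁻¹ * (qPoch x (N - j).toNat)⁻¹ := by
  rw [tripleCoeff, if_pos h1]
  have : 2 * N = (j + N).toNat + (N - j).toNat := by omega
  rw [this, gaussBinom_add hx, ← this]

/-- The Jacobi triple product: the partial products converge to the theta series. The finite form
has coefficients that are uniformly bounded and tend to `1 / ∏ (1 - x^k)`, so dominated convergence
applies. -/
theorem jacobi_triple [CompleteSpace K] {y z : K} (hy1 : ‖y‖ < 1) (hy : y ≠ 0) (hz : z ≠ 0) :
    Tendsto (fun N : ℕ => ∏ k ∈ Finset.range N, ((1 - (y ^ 2) ^ (k + 1)) *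
      ((1 - z * (y ^ 2) ^ k) * (1 - (y ^ 2) ^ (k + 1) / z)))) atTop
      (𝓝 (∑' j : ℤ, thetaTerm y z j)) := by
  have hx : ‖y ^ 2‖ < 1 := by
    rw [norm_pow]; exact pow_lt_one₀ (norm_nonneg y) hy1 two_ne_zero
  obtain ⟨L, hL, hQ⟩ := exists_qPoch_tendsto hx
  have hQi := hQ.inv₀ hL
  obtain ⟨M, hM⟩ := hQ.norm.bddAbove_range
  obtain ⟨M', hM'⟩ := hQi.norm.bddAbove_range
  have hM : ∀ n, ‖qPoch (y ^ 2) n‖ ≤ M := fun n => hM ⟨n, rfl⟩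
  have hM' : ∀ n, ‖(qPoch (y ^ 2) n)⁻¹‖ ≤ M' := fun n => hM' ⟨n, rfl⟩
  have hM0 : 0 ≤ M := (norm_nonneg _).trans (hM 0)
  have hM0' : 0 ≤ M' := (norm_nonneg _).trans (hM' 0)
  have key : Tendsto (fun N : ℕ => ∑' j : ℤ, thetaTerm y z j * tripleCoeff (y ^ 2) N j) atTop
      (𝓝 (∑' j : ℤ, thetaTerm y z j * L⁻¹)) := by
    refine tendsto_tsum_of_dominated_convergence
      (bound := fun j => ‖thetaTerm y z j‖ * (M * M' * M'))
      ((summable_thetaTerm hy1 hy hz).mul_right _) (fun j => ?_) (Eventually.of_forall fun N j => ?_)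
    · refine Tendsto.const_mul _ ?_
      have t1 : Tendsto (fun N : ℕ => 2 * N) atTop atTop :=
        tendsto_atTop_atTop.mpr fun b => ⟨b, fun a ha => by omega⟩
      have t2 : Tendsto (fun N : ℕ => (j + N).toNat) atTop atTop :=
        tendsto_atTop_atTop.mpr fun b => ⟨b + j.natAbs, fun a ha => by omega⟩
      have t3 : Tendsto (fun N : ℕ => (N - j).toNat) atTop atTop :=
        tendsto_atTop_atTop.mpr fun b => ⟨b + j.natAbs, fun a ha => by omega⟩
      have := ((hQ.comp t1).mul (hQi.comp t2)).mul (hQi.comp t3)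
      rw [mul_inv_cancel₀ hL, one_mul] at this
      refine this.congr' ?_
      filter_upwards [eventually_ge_atTop j.natAbs] with N hN
      rw [tripleCoeff_eq hx (by omega) (by omega)]
      rfl
    · rw [norm_mul]
      refine mul_le_mul_of_nonneg_left ?_ (norm_nonneg _)
      by_cases h1 : 0 ≤ j + N
      · by_cases h2 : j ≤ N
        · rw [tripleCoeff_eq hx h1 h2, norm_mul, norm_mul]
          gcongr
          exacts [hM _, hM' _, hM' _]
        · rw [tripleCoeff, if_pos h1, gaussBinom_of_lt _ _ _ (by omega), norm_zero]
          positivity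
      · rw [tripleCoeff, if_neg h1, norm_zero]
        positivity
  rw [tsum_mul_right] at key
  have := hQ.mul key
  rw [mul_comm L, mul_assoc, inv_mul_cancel₀ hL, mul_one] at this
  refine this.congr fun N => ?_
  rw [Finset.prod_mul_distrib, ← finite_triple_tsum y z hy hz N]
  rfl

end Limit

/-! ### Theta series at fifth roots of unity -/

section FifthRoot

variable {K : Type*} [NormedField K]

lemma tsum_int_mod_five [CompleteSpace K] {f : ℤ → K} (hf : Summable fun j => ‖f j‖) :
    ∑' j, f j = ∑ r : Fin 5, ∑' m : ℤ, f (5 * m + (r : ℕ)) := by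
  have hs : Summable f := hf.of_norm
  have hs' : Summable (f ∘ (Int.divModEquiv 5).symm) :=
    (Int.divModEquiv 5).symm.summable_iff.mpr hs
  rw [← (Int.divModEquiv 5).symm.tsum_eq, (show Summable fun c => f ((Int.divModEquiv 5).symm c) from hs').tsum_prod]
  have e : ∀ (m : ℤ) (r : Fin 5), (Int.divModEquiv 5).symm (m, r) = 5 * m + (r : ℕ) := by
    intro m r; simp [Int.divModEquiv]; ring
  simp only [e, tsum_fintype]
  refine Summable.tsum_finsetSum fun r _ => ?_
  refine hs.comp_injective (i := fun m : ℤ => 5 * m + (r : ℕ)) fun a b h => ?_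
  simpa using h

lemma thetaTerm_add (y : K) {z : K} (hz : z ^ 5 = 1) (m : ℤ) (r : ℕ) :
    thetaTerm y z (5 * m + r) = z ^ r * thetaTerm y 1 (5 * m + r) := by
  have hz0 : z ≠ 0 := by rintro rfl; norm_num at hz
  have : z ^ (5 * m + (r : ℤ)) = z ^ r := by
    rw [zpow_add₀ hz0, zpow_mul, zpow_natCast]
    norm_cast
    rw [hz, one_zpow, one_mul]
  rw [thetaTerm, thetaTerm, this, one_zpow]
  ring

/-- The reflection `j ↦ 1 - j` of the theta series at `z = 1`. -/
lemma thetaTerm_reflect (y : K) (j : ℤ) : thetaTerm y 1 (1 - j) = -thetaTerm y 1 j := by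
  have h1 : (-1 : K) ^ (1 - j) = -(-1) ^ j := by
    rw [zpow_sub₀ (by simp), zpow_one]
    rcases Int.even_or_odd j with h | h
    · simp [h.neg_one_zpow]
    · simp [h.neg_one_zpow]
  rw [thetaTerm, thetaTerm, h1, show (1 - j) * (1 - j - 1) = j * (j - 1) by ring]
  simp

lemma tsum_reflect (y : K) (r s c : ℤ) (h : 5 * c + s + r = 1) :
    ∑' m : ℤ, thetaTerm y 1 (5 * m + s) = -∑' m : ℤ, thetaTerm y 1 (5 * m + r) := by
  rw [← (Equiv.subLeft c).tsum_eq, ← tsum_neg]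
  refine tsum_congr fun m => ?_
  rw [← thetaTerm_reflect]
  congr 1
  simp only [Equiv.subLeft_apply]
  linarith

/-- At a fifth root of unity `z` the theta series is a combination of two theta series in base
`y ^ 25`: of the five residue classes of the summation index modulo `5`, the reflection `j ↦ 1 - j`
exchanges `0` with `1` and `2` with `4`, and kills the class of `3`. -/
lemma tsum_thetaTerm_fifth_root [CompleteSpace K] [CharZero K] {y z : K} (hy1 : ‖y‖ < 1)
    (hy : y ≠ 0) (hz : z ^ 5 = 1) :
    ∑' j : ℤ, thetaTerm y z j = (1 - z) * (∑' m : ℤ, thetaTerm (y ^ 25) (y ^ 20) m +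
      (z ^ 2 + z ^ 3) * (y ^ 2 * ∑' m : ℤ, thetaTerm (y ^ 25) (y ^ 40) m)) := by
  have hz0 : z ≠ 0 := by rintro rfl; norm_num at hz
  rw [tsum_int_mod_five (summable_thetaTerm hy1 hy hz0)]
  simp only [thetaTerm_add y hz, tsum_mul_left, Fin.sum_univ_five]
  have t1 := tsum_reflect y 0 1 0 (by norm_num)
  have t3 := tsum_reflect y 3 3 (-1) (by norm_num)
  have t4 := tsum_reflect y 2 4 (-1) (by norm_num)
  have t3' : ∑' m : ℤ, thetaTerm y 1 (5 * m + 3) = 0 := self_eq_neg.mp t3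
  have p5 : ∀ m : ℤ, (-1 : K) ^ (5 * m) = (-1) ^ m := fun m => by
    rw [zpow_mul]; norm_num
  have z0 : ∑' m : ℤ, thetaTerm y 1 (5 * m + 0) = ∑' m : ℤ, thetaTerm (y ^ 25) (y ^ 20) m := by
    refine tsum_congr fun m => ?_
    rw [thetaTerm, thetaTerm, one_zpow, add_zero, p5, ← zpow_natCast y 25, ← zpow_natCast y 20,
      ← zpow_mul, ← zpow_mul, mul_assoc _ (y ^ _), ← zpow_add₀ hy, mul_one]
    congr 2; push_cast; ring
  have z2 : ∑' m : ℤ, thetaTerm y 1 (5 * m + 2) =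
      y ^ 2 * ∑' m : ℤ, thetaTerm (y ^ 25) (y ^ 40) m := by
    rw [← tsum_mul_left]
    refine tsum_congr fun m => ?_
    have p2 : (-1 : K) ^ (5 * m + 2) = (-1) ^ m := by
      rw [zpow_add₀ (by simp), p5]; norm_num
    rw [thetaTerm, thetaTerm, one_zpow, p2, ← zpow_natCast y 25, ← zpow_natCast y 40,
      ← zpow_mul, ← zpow_mul, mul_assoc _ (y ^ _), ← zpow_add₀ hy, mul_one, mul_left_comm,
      ← zpow_natCast y 2, ← zpow_add₀ hy]
    congr 2; push_cast; ring
  simp only [Fin.val_zero, Fin.val_one, Fin.val_two, show ((3 : Fin 5) : ℕ) = 3 from rfl,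
    show ((4 : Fin 5) : ℕ) = 4 from rfl, Nat.cast_zero, Nat.cast_one, Nat.cast_ofNat]
  rw [t1, t3', t4, z0, z2]
  ring

end FifthRoot

/-! ### Real infinite products -/

/-- The product `∏_{n ≥ 0} (1 - q^{m n + r})`. -/
noncomputable def apProd (q : ℝ) (m r : ℕ) : ℝ := ∏' n : ℕ, (1 - q ^ (m * n + r))

section RealProducts

variable {q : ℝ}

lemma summable_ap (h0 : 0 < q) (h1 : q < 1) {m : ℕ} (hm : m ≠ 0) (r : ℕ) :
    Summable fun n : ℕ => ‖-q ^ (m * n + r)‖ := by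
  refine ((summable_geometric_of_lt_one (by positivity)
    (pow_lt_one₀ h0.le h1 hm)).mul_right (q ^ r)).congr fun n => ?_
  rw [norm_neg, Real.norm_of_nonneg (by positivity), pow_add, pow_mul]

lemma multipliable_ap (h0 : 0 < q) (h1 : q < 1) {m : ℕ} (hm : m ≠ 0) (r : ℕ) :
    Multipliable fun n : ℕ => 1 - q ^ (m * n + r) := by
  simpa [sub_eq_add_neg] using multipliable_one_add_of_summable (summable_ap h0 h1 hm r)

/-- A convergent product of positive factors `1 + f n` with `∑ |f n| < ∞` is positive. -/
lemma tprod_one_add_pos {f : ℕ → ℝ} (hf : Summable fun n => ‖f n‖) (hp : ∀ n, 0 < 1 + f n) :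
    0 < ∏' n, (1 + f n) := by
  refine lt_of_le_of_ne ?_ (tprod_one_add_ne_zero_of_summable (fun n => (hp n).ne') hf).symm
  exact ge_of_tendsto' (multipliable_one_add_of_summable hf).tendsto_prod_tprod_nat
    fun n => Finset.prod_nonneg fun i _ => (hp i).le

lemma apProd_pos (h0 : 0 < q) (h1 : q < 1) {m r : ℕ} (hm : m ≠ 0) (hr : r ≠ 0) :
    0 < apProd q m r := by
  have := tprod_one_add_pos (summable_ap h0 h1 hm r) fun n => by
    have := pow_lt_one₀ h0.le h1 (n := m * n + r) (by omega)
    linarith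
  simpa [apProd, sub_eq_add_neg] using this

lemma tendsto_apProd (h0 : 0 < q) (h1 : q < 1) {m : ℕ} (hm : m ≠ 0) (r : ℕ) :
    Tendsto (fun N => ∏ n ∈ Finset.range N, (1 - q ^ (m * n + r))) atTop (𝓝 (apProd q m r)) :=
  (multipliable_ap h0 h1 hm r).tendsto_prod_tprod_nat

lemma tendsto_mul_atTop {c : ℕ} (hc : c ≠ 0) : Tendsto (fun N : ℕ => c * N) atTop atTop :=
  tendsto_atTop_atTop.mpr fun b => ⟨b, fun a ha =>
    ha.trans (Nat.le_mul_of_pos_left a (Nat.pos_of_ne_zero hc))⟩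

/-- Splitting `∏ (1 - q^n)` according to the residue of `n` modulo `5`. -/
lemma apProd_five (h0 : 0 < q) (h1 : q < 1) :
    apProd q 1 1 = apProd q 5 1 * apProd q 5 2 * apProd q 5 3 * apProd q 5 4 * apProd q 5 5 := by
  have a := (tendsto_apProd h0 h1 one_ne_zero 1).comp (tendsto_mul_atTop (c := 5) (by norm_num))
  have t := fun r => tendsto_apProd h0 h1 (m := 5) (by norm_num) r
  refine tendsto_nhds_unique a ((((((t 1).mul (t 2)).mul (t 3)).mul (t 4)).mul (t 5)).congr
    fun N => ?_)
  simp only [Function.comp]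
  induction N with
  | zero => simp
  | succ N ih =>
    rw [show 5 * (N + 1) = 5 * N + 4 + 1 by ring]
    simp only [Finset.prod_range_succ] at ih ⊢
    rw [← ih]
    ring

/-- Euler's pentagonal number theorem. -/
lemma fneg_sq {s : ℝ} (h0 : 0 < s) (h1 : s < 1) : fneg (s ^ 2) = apProd (s ^ 2) 1 1 := by
  have hs := h0.ne'
  have j := jacobi_triple (K := ℝ) (y := s ^ 3) (z := s ^ 2)
    (by rw [Real.norm_of_nonneg (by positivity)]; exact pow_lt_one₀ h0.le h1 (by norm_num))
    (by positivity) (by positivity)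
  have a := (tendsto_apProd (q := s ^ 2) (by positivity) (pow_lt_one₀ h0.le h1 (by norm_num))
    one_ne_zero 1).comp (tendsto_mul_atTop (c := 3) (by norm_num))
  have e : fneg (s ^ 2) = ∑' j : ℤ, thetaTerm (s ^ 3) (s ^ 2) j := by
    refine tsum_congr fun j => ?_
    have h2 : 2 * (j * (3 * j - 1) / 2) = j * (3 * j - 1) :=
      Int.two_mul_ediv_two_of_even (by grind)
    rw [thetaTerm, ← zpow_natCast s 2, ← zpow_natCast s 3, ← zpow_mul, ← zpow_mul, ← zpow_mul,
      mul_assoc, ← zpow_add₀ hs]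
    congr 2
    push_cast
    rw [h2]; ring
  rw [e]
  refine tendsto_nhds_unique j (a.congr fun N => ?_)
  simp only [Function.comp]
  induction N with
  | zero => simp
  | succ N ih =>
    rw [show 3 * (N + 1) = 3 * N + 1 + 1 + 1 by ring]
    simp only [Finset.prod_range_succ] at ih ⊢
    rw [← ih, mul_assoc, mul_assoc]
    congr 1
    have e1 : (1 : ℝ) - ((s ^ 3) ^ 2) ^ (N + 1) / s ^ 2 = 1 - (s ^ 2) ^ (3 * N + 2) := by
      congr 1; field_simp; ring
    rw [e1]; ring

/-- The triple product in base `q⁵ = y ^ 50`; the values `r = 2` and `r = 4` are the denominator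
and numerator theta functions of the Rogers–Ramanujan continued fraction. -/
lemma theta_eq_apProd {y : ℝ} (h0 : 0 < y) (h1 : y < 1) {r : ℕ} (hr : r ≤ 5) :
    ∑' m : ℤ, thetaTerm (y ^ 25) (y ^ (10 * r)) m =
      apProd (y ^ 10) 5 5 * (apProd (y ^ 10) 5 r * apProd (y ^ 10) 5 (5 - r)) := by
  have j := jacobi_triple (K := ℝ) (y := y ^ 25) (z := y ^ (10 * r))
    (by rw [Real.norm_of_nonneg (by positivity)]; exact pow_lt_one₀ h0.le h1 (by norm_num))
    (by positivity) (by positivity)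
  have t := fun r => tendsto_apProd (q := y ^ 10) (by positivity)
    (pow_lt_one₀ h0.le h1 (by norm_num)) (m := 5) (by norm_num) r
  refine tendsto_nhds_unique j (((t 5).mul ((t r).mul (t (5 - r)))).congr fun N => ?_)
  rw [← Finset.prod_mul_distrib, ← Finset.prod_mul_distrib]
  refine Finset.prod_congr rfl fun k _ => ?_
  have e1 : ((y ^ 25) ^ 2) ^ (k + 1) / y ^ (10 * r) = (y ^ 10) ^ (5 * k + (5 - r)) := by
    rw [div_eq_iff (by positivity), ← pow_mul, ← pow_mul, ← pow_mul, ← pow_add]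
    congr 1; omega
  rw [e1]
  simp only [← pow_mul, ← pow_add]
  ring_nf

end RealProducts

/-! ### The golden-ratio products -/

/-- The product `∏_{n ≥ 1} (1 + c x^n + x^{2n})`. -/
noncomputable def quadProd (c x : ℝ) : ℝ := ∏' n : ℕ, (1 + (c * x ^ (n + 1) + (x ^ (n + 1)) ^ 2))

section Golden

lemma betaRR_sq : betaRR ^ 2 = betaRR + 1 := by
  have := Real.sq_sqrt (show (0 : ℝ) ≤ 5 by norm_num)
  rw [betaRR]; linarith

lemma alphaRR_eq : alphaRR = 1 - betaRR := by
  rw [alphaRR, betaRR]; ring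

lemma betaRR_pos : 0 < betaRR := by
  rw [betaRR]; positivity

variable {x : ℝ}

lemma summable_quad (h0 : 0 < x) (h1 : x < 1) (c : ℝ) :
    Summable fun n : ℕ => ‖c * x ^ (n + 1) + (x ^ (n + 1)) ^ 2‖ := by
  have g : Summable fun n : ℕ => x ^ (n + 1) :=
    (summable_nat_add_iff 1).mpr (summable_geometric_of_lt_one h0.le h1)
  have g2 : Summable fun n : ℕ => (x ^ 2) ^ (n + 1) :=
    (summable_nat_add_iff 1).mpr (summable_geometric_of_lt_one (by positivity)
      (pow_lt_one₀ h0.le h1 two_ne_zero))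
  refine ((g.mul_left c).add (g2.congr fun n => ?_)).norm
  rw [← pow_mul, ← pow_mul, mul_comm]

lemma multipliable_quad (h0 : 0 < x) (h1 : x < 1) (c : ℝ) :
    Multipliable fun n : ℕ => 1 + (c * x ^ (n + 1) + (x ^ (n + 1)) ^ 2) :=
  multipliable_one_add_of_summable (summable_quad h0 h1 c)

lemma quadProd_pos (h0 : 0 < x) (h1 : x < 1) {c : ℝ} (hc : c ^ 2 < 4) : 0 < quadProd c x := by
  refine tprod_one_add_pos (summable_quad h0 h1 c) fun n => ?_
  nlinarith [sq_nonneg (2 * x ^ (n + 1) + c)]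

lemma betaRR_lt : betaRR < 2 := by
  nlinarith [betaRR_sq, betaRR_pos]

/-- `(1 - x) (1 + α x + x²) (1 + β x + x²) = 1 - x⁵`, taken over all powers of `x`. -/
lemma apProd_mul_quadProd (h0 : 0 < x) (h1 : x < 1) :
    apProd x 1 1 * quadProd alphaRR x * quadProd betaRR x = apProd (x ^ 5) 1 1 := by
  have t := tendsto_apProd h0 h1 one_ne_zero 1
  have t5 := tendsto_apProd (q := x ^ 5) (by positivity) (pow_lt_one₀ h0.le h1 (by norm_num))
    one_ne_zero 1
  have ta := (multipliable_quad h0 h1 alphaRR).tendsto_prod_tprod_nat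
  have tb := (multipliable_quad h0 h1 betaRR).tendsto_prod_tprod_nat
  refine tendsto_nhds_unique ((t.mul ta).mul tb) (t5.congr fun N => ?_)
  rw [← Finset.prod_mul_distrib, ← Finset.prod_mul_distrib]
  refine Finset.prod_congr rfl fun n _ => ?_
  rw [one_mul, alphaRR_eq, ← pow_mul, mul_comm 5, pow_mul]
  generalize x ^ (n + 1) = X
  linear_combination ((1 - X) * X ^ 2) * betaRR_sq

/-- The triple product at the primitive fifth root of unity `z` with `z² + α z + 1 = 0`: the product
of the `(1 - x^n) (1 + α x^n + x^{2n})`, `x = y²`, is a combination of two theta functions. -/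
lemma apProd_mul_quadProd_alpha {y : ℝ} (h0 : 0 < y) (h1 : y < 1) :
    apProd (y ^ 2) 1 1 * quadProd alphaRR (y ^ 2) =
      ∑' m : ℤ, thetaTerm (y ^ 25) (y ^ 20) m -
        betaRR * (y ^ 2 * ∑' m : ℤ, thetaTerm (y ^ 25) (y ^ 40) m) := by
  obtain ⟨s, hs⟩ := IsAlgClosed.exists_eq_mul_self ((alphaRR : ℂ) ^ 2 - 4)
  set z : ℂ := (-alphaRR + s) / 2 with hzdef
  have hquad : z ^ 2 + alphaRR * z + 1 = 0 := by
    rw [hzdef]; linear_combination (-1 / 4 : ℂ) * hs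
  clear_value z
  have ha : (alphaRR : ℂ) = 1 - betaRR := by rw [alphaRR_eq]; push_cast; rfl
  have hb : (betaRR : ℂ) ^ 2 = betaRR + 1 := by exact_mod_cast betaRR_sq
  have hz5 : z ^ 5 = 1 := by
    rw [ha] at hquad
    linear_combination (z - 1) * (z ^ 2 + betaRR * z + 1) * hquad + (z - 1) * z ^ 2 * hb
  have hz1 : 1 - z ≠ 0 := by
    intro h
    rw [← sub_eq_zero.mp h, ha] at hquad
    have h3 : ((3 - betaRR : ℝ) : ℂ) = 0 := by push_cast; linear_combination hquad
    have := betaRR_lt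
    have := Complex.ofReal_eq_zero.mp h3
    linarith
  have hz0 : z ≠ 0 := by rintro rfl; norm_num at hz5
  have hy1 : ‖(y : ℂ)‖ < 1 := by rwa [Complex.norm_real, Real.norm_of_nonneg h0.le]
  have hy0 : (y : ℂ) ≠ 0 := Complex.ofReal_ne_zero.mpr h0.ne'
  have hx0 : (0 : ℝ) < y ^ 2 := by positivity
  have hx1 : y ^ 2 < 1 := pow_lt_one₀ h0.le h1 two_ne_zero
  have j := jacobi_triple hy1 hy0 hz0
  have hprod := (tendsto_apProd hx0 hx1 one_ne_zero 1).mul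
    (multipliable_quad hx0 hx1 alphaRR).tendsto_prod_tprod_nat
  change Tendsto _ atTop (𝓝 (apProd (y ^ 2) 1 1 * quadProd alphaRR (y ^ 2))) at hprod
  have hlim := hprod.ofReal.const_mul (1 - z)
  have hzN : Tendsto (fun N : ℕ => 1 - z * ((y : ℂ) ^ 2) ^ N) atTop (𝓝 (1 - z * 0)) := by
    refine tendsto_const_nhds.sub ((tendsto_pow_atTop_nhds_zero_of_norm_lt_one ?_).const_mul z)
    rw [norm_pow]; exact pow_lt_one₀ (norm_nonneg _) hy1 two_ne_zero
  -- The partial triple product has the factor `1 - z` in place of `1 - z x^N`.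
  have hfin : ∀ N : ℕ, (1 - z * ((y : ℂ) ^ 2) ^ N) *
      ∏ k ∈ Finset.range N, ((1 - ((y : ℂ) ^ 2) ^ (k + 1)) *
        ((1 - z * ((y : ℂ) ^ 2) ^ k) * (1 - ((y : ℂ) ^ 2) ^ (k + 1) / z))) =
      (1 - z) * (((∏ n ∈ Finset.range N, (1 - (y ^ 2) ^ (1 * n + 1))) *
        ∏ n ∈ Finset.range N, (1 + (alphaRR * (y ^ 2) ^ (n + 1) + ((y ^ 2) ^ (n + 1)) ^ 2)) : ℝ)
        : ℂ) := by
    intro N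
    induction N with
    | zero => simp
    | succ N ih =>
      push_cast at ih ⊢
      simp only [Finset.prod_range_succ, one_mul] at ih ⊢
      have e : (1 - z * ((y : ℂ) ^ 2) ^ (N + 1)) * (1 - ((y : ℂ) ^ 2) ^ (N + 1) / z) =
          1 + (alphaRR * ((y : ℂ) ^ 2) ^ (N + 1) + (((y : ℂ) ^ 2) ^ (N + 1)) ^ 2) := by
        generalize ((y : ℂ) ^ 2) ^ (N + 1) = X
        field_simp
        linear_combination (-X) * hquad
      rw [← e]
      linear_combination ((1 - ((y : ℂ) ^ 2) ^ (N + 1)) *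
        ((1 - z * ((y : ℂ) ^ 2) ^ (N + 1)) * (1 - ((y : ℂ) ^ 2) ^ (N + 1) / z))) * ih
  have heq := tendsto_nhds_unique (hzN.mul j) (hlim.congr fun N => (hfin N).symm)
  rw [tsum_thetaTerm_fifth_root hy1 hy0 hz5] at heq
  have hcast : ∀ r : ℕ, ((∑' m : ℤ, thetaTerm (y ^ 25) (y ^ r) m : ℝ) : ℂ) =
      ∑' m : ℤ, thetaTerm ((y : ℂ) ^ 25) ((y : ℂ) ^ r) m := by
    intro r
    rw [Complex.ofReal_tsum]
    refine tsum_congr fun m => ?_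
    simp [thetaTerm]
  have hz23 : z ^ 2 + z ^ 3 = -betaRR := by
    rw [ha] at hquad
    linear_combination (z + betaRR) * hquad + z * hb
  rw [hz23, mul_zero, sub_zero, one_mul, ← hcast, ← hcast] at heq
  have := mul_left_cancel₀ hz1 heq
  apply Complex.ofReal_injective
  rw [← this]
  push_cast
  ring

end Golden

/-- The Rogers–Ramanujan continued fraction as a quotient of products over residue classes. -/
lemma rrcf_pow {y : ℝ} (h0 : 0 < y) (h1 : y < 1) :
    rrcf (y ^ 10) = y ^ 2 * (apProd (y ^ 10) 5 4 * apProd (y ^ 10) 5 1 /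
      (apProd (y ^ 10) 5 3 * apProd (y ^ 10) 5 2)) := by
  have hq0 : 0 < y ^ 10 := by positivity
  have hq1 : y ^ 10 < 1 := pow_lt_one₀ h0.le h1 (by norm_num)
  have hp : (y ^ 10) ^ ((1 : ℝ) / 5) = y ^ 2 := by
    rw [← Real.rpow_natCast y 10, ← Real.rpow_mul h0.le, ← Real.rpow_natCast y 2]
    norm_num
  have hh := fun r => (multipliable_ap hq0 hq1 (m := 5) (by norm_num) r).hasProd
  have hne : ∀ r, r ≠ 0 → apProd (y ^ 10) 5 r ≠ 0 := fun r hr =>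
    (apProd_pos hq0 hq1 (by norm_num) hr).ne'
  have := ((hh 4).mul (hh 1)).div₀ ((hh 3).mul (hh 2))
    (mul_ne_zero (hne 3 (by norm_num)) (hne 2 (by norm_num)))
  rw [rrcf, hp]
  congr 1
  exact this.tprod_eq

theorem ramanujan_product_beta (q : ℝ) (hq0 : 0 < q) (hq1 : q < 1) :
    1 / Real.sqrt (rrcf q) - betaRR * Real.sqrt (rrcf q) =
      q ^ (-(1 : ℝ)/10) * Real.sqrt (fneg q / fneg (q^5)) *
        ∏' n : ℕ,
          1 / (1 + betaRR * q ^ (((n : ℝ) + 1)/5) + q ^ ((2*((n : ℝ) + 1))/5)) := by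
  -- All fractional powers of `q` become integral powers of `y = q^{1/10}`.
  obtain ⟨y, h0, h1, rfl⟩ : ∃ y : ℝ, 0 < y ∧ y < 1 ∧ q = y ^ 10 := by
    refine ⟨q ^ ((1 : ℝ) / 10), by positivity, Real.rpow_lt_one hq0.le hq1 (by norm_num), ?_⟩
    rw [← Real.rpow_natCast, ← Real.rpow_mul hq0.le]
    norm_num
  have hx0 : (0 : ℝ) < y ^ 2 := by positivity
  have hx1 : y ^ 2 < 1 := pow_lt_one₀ h0.le h1 two_ne_zero
  have hpow : (y ^ 10) ^ (-(1 : ℝ) / 10) = y⁻¹ := by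
    rw [← Real.rpow_natCast y 10, ← Real.rpow_mul h0.le, ← Real.rpow_neg_one]
    norm_num
  have hprod : ∏' n : ℕ, 1 / (1 + betaRR * (y ^ 10) ^ (((n : ℝ) + 1) / 5) +
      (y ^ 10) ^ ((2 * ((n : ℝ) + 1)) / 5)) = (quadProd betaRR (y ^ 2))⁻¹ := by
    have hb4 : betaRR ^ 2 < 4 := by nlinarith [betaRR_lt, betaRR_pos]
    rw [quadProd, ← (multipliable_quad hx0 hx1 betaRR).tprod_inv₀ (quadProd_pos hx0 hx1 hb4).ne']
    refine tprod_congr fun n => ?_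
    have e1 : (y ^ 10) ^ (((n : ℝ) + 1) / 5) = (y ^ 2) ^ (n + 1) := by
      rw [← Real.rpow_natCast y 10, ← Real.rpow_mul h0.le, ← pow_mul, ← Real.rpow_natCast]
      congr 1; push_cast; ring
    have e2 : (y ^ 10) ^ ((2 * ((n : ℝ) + 1)) / 5) = ((y ^ 2) ^ (n + 1)) ^ 2 := by
      rw [← Real.rpow_natCast y 10, ← Real.rpow_mul h0.le, ← pow_mul, ← pow_mul,
        ← Real.rpow_natCast]
      congr 1; push_cast; ring
    rw [e1, e2, one_div, add_assoc]
  have hf1 : fneg (y ^ 10) = apProd (y ^ 10) 1 1 := by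
    have := fneg_sq (s := y ^ 5) (by positivity) (pow_lt_one₀ h0.le h1 (by norm_num))
    rwa [← pow_mul] at this
  have hf5 : fneg ((y ^ 10) ^ 5) = apProd (y ^ 10) 5 5 := by
    have := fneg_sq (s := y ^ 25) (by positivity) (pow_lt_one₀ h0.le h1 (by norm_num))
    rw [← pow_mul] at this ⊢
    rw [this, apProd, apProd]
    refine tprod_congr fun n => ?_
    rw [← pow_mul, ← pow_mul]
    congr 2; ring
  have hA := theta_eq_apProd h0 h1 (r := 2) (by norm_num)
  have hB := theta_eq_apProd h0 h1 (r := 4) (by norm_num)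
  have hP := apProd_mul_quadProd_alpha h0 h1
  have hE := apProd_mul_quadProd hx0 hx1
  norm_num at hA hB
  rw [hA, hB] at hP
  rw [hP, ← pow_mul, apProd_five (by positivity) (pow_lt_one₀ h0.le h1 (by norm_num))] at hE
  norm_num at hE
  have hpos : ∀ r, r ≠ 0 → 0 < apProd (y ^ 10) 5 r := fun r hr =>
    apProd_pos (by positivity) (pow_lt_one₀ h0.le h1 (by norm_num)) (by norm_num) hr
  have p1 := hpos 1 (by norm_num)
  have p2 := hpos 2 (by norm_num)
  have p3 := hpos 3 (by norm_num)
  have p4 := hpos 4 (by norm_num)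
  have p5 := hpos 5 (by norm_num)
  have hb4 : betaRR ^ 2 < 4 := by nlinarith [betaRR_lt, betaRR_pos]
  have pQ := quadProd_pos hx0 hx1 hb4
  rw [hpow, hprod, hf1, hf5, rrcf_pow h0 h1,
    apProd_five (by positivity) (pow_lt_one₀ h0.le h1 (by norm_num))]
  generalize apProd (y ^ 10) 5 1 = L1 at *
  generalize apProd (y ^ 10) 5 2 = L2 at *
  generalize apProd (y ^ 10) 5 3 = L3 at *
  generalize apProd (y ^ 10) 5 4 = L4 at *
  generalize apProd (y ^ 10) 5 5 = L5 at *
  generalize quadProd betaRR (y ^ 2) = Q at *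
  -- Both square roots are expressed through `u = √(L₁ L₄)` and `v = √(L₂ L₃)`.
  obtain ⟨u, hu, hu2⟩ : ∃ u : ℝ, 0 < u ∧ L4 * L1 = u ^ 2 :=
    ⟨√(L4 * L1), by positivity, (Real.sq_sqrt (by positivity)).symm⟩
  obtain ⟨v, hv, hv2⟩ : ∃ v : ℝ, 0 < v ∧ L3 * L2 = v ^ 2 :=
    ⟨√(L3 * L2), by positivity, (Real.sq_sqrt (by positivity)).symm⟩
  have s1 : √(y ^ 2 * (L4 * L1 / (L3 * L2))) = y * u / v := by
    rw [hu2, hv2, show y ^ 2 * (u ^ 2 / v ^ 2) = (y * u / v) ^ 2 by ring]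
    exact Real.sqrt_sq (by positivity)
  have s2 : √(L1 * L2 * L3 * L4 * L5 / L5) = u * v := by
    rw [mul_div_cancel_right₀ _ p5.ne', show L1 * L2 * L3 * L4 = (L4 * L1) * (L3 * L2) by ring,
      hu2, hv2, show u ^ 2 * v ^ 2 = (u * v) ^ 2 by ring]
    exact Real.sqrt_sq (by positivity)
  have hE' : (v ^ 2 - betaRR * (y ^ 2 * u ^ 2)) * Q = u ^ 2 * v ^ 2 := by
    apply mul_left_cancel₀ p5.ne'
    rw [← hu2, ← hv2]
    linear_combination hE
  rw [s1, s2]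
  field_simp
  linear_combination hE'
end

section
/- For every real q with 0 < q < 1, writing t = R(q): (1/√t)^5 − (β·√t)^5 = q^{−1/2} · √(f(−q)/f(−q⁵)) · ∏_{n=1}^∞ 1/(1 + β·q^{n} + q^{2n})^5. -/
/-! Write `(z; q)` for `∏_{n ≥ 0} (1 - z qⁿ)`, and let `P(x) = (x², x³, x⁵; x⁵)` and
`Q(x) = (x, x⁴, x⁵; x⁵)` be the products `thetaP` and `thetaQ`, so that `R(x) = x^{1/5} Q(x) / P(x)`.

Let `ω = exp (2πi/5)`, for which `ω² + ω³ = -β`. In the Jacobi triple product (`hasSum_jt`) for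
`(q; q) (ω; q) (q/ω; q)`, the terms of the theta series are sorted by the residue of their index
modulo `5`. Each residue class is again a theta series, of base `q²⁵`. One class is evaluated at
`z = 1` and vanishes, the others pair up, and after division by `1 - ω` one obtains (`dissection`)
`(q; q) (ωq; q) (ω⁴q; q) = P(q⁵) - β q Q(q⁵)`.

Replacing `q` by the five conjugates `ωᵏ y` of `y = q^{1/5}` and multiplying gives fifth powers
(`fifth_power_identity`): the right side becomes `P(q)⁵ - β⁵ q Q(q)⁵`, and the left side becomes
`((q; q) / (q⁵; q⁵))³ ((q; q) (ωq; q) (ω⁴q; q))⁵`. Since `∏ₖ (ωᵏ q; q) = (q⁵; q⁵)` and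
`(ω²q; q) (ω³q; q) = ∏ (1 + β qⁿ + q²ⁿ) =: B`, the result is the real identity (`real_identity`)
`(q; q)³ (q⁵; q⁵)² = B⁵ (P⁵ - β⁵ q Q⁵)`.

With `t = R(q)`, the left side of the theorem is `t^{-5/2} (1 - β⁵ t⁵) =
(P⁵ - β⁵ q Q⁵) / (t^{5/2} P⁵)`. Here `t⁵ P¹⁰ = q (P Q)⁵` and `P Q = (q; q) (q⁵; q⁵)`, and the
pentagonal number theorem (`fneg_eq_poch`) identifies `f(-q)` with `(q; q)`, which yields the stated right side.
-/

open Real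

open Filter Topology

/-! ### Infinite q-Pochhammer symbols -/

section Poch

variable {𝕜 : Type*} [NormedField 𝕜] [CompleteSpace 𝕜]

/-- The infinite `q`-Pochhammer symbol `(z; q)_∞ = ∏_{n ≥ 0} (1 - z qⁿ)`. -/
noncomputable def poch (z q : 𝕜) : 𝕜 := ∏' n : ℕ, (1 - z * q ^ n)

omit [CompleteSpace 𝕜] in
lemma summable_norm_poch (z : 𝕜) {q : 𝕜} (hq : ‖q‖ < 1) :
    Summable fun n : ℕ => ‖-(z * q ^ n)‖ := by
  simp only [norm_neg, norm_mul, norm_pow]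
  exact (summable_geometric_of_lt_one (norm_nonneg _) hq).mul_left _

lemma hasProd_poch (z : 𝕜) {q : 𝕜} (hq : ‖q‖ < 1) :
    HasProd (fun n : ℕ => 1 - z * q ^ n) (poch z q) := by
  have h := multipliable_one_add_of_summable (summable_norm_poch z hq)
  simp only [← sub_eq_add_neg] at h
  exact h.hasProd

lemma poch_ne_zero {z q : 𝕜} (hq : ‖q‖ < 1) (hz : ‖z‖ < 1) : poch z q ≠ 0 := by
  have h := tprod_one_add_ne_zero_of_summable (f := fun n : ℕ => -(z * q ^ n)) ?_
    (summable_norm_poch z hq)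
  · simp only [← sub_eq_add_neg] at h
    exact h
  · intro n h0
    have h1 : z * q ^ n = 1 := by linear_combination -h0
    have h2 : ‖z‖ * ‖q‖ ^ n = 1 := by rw [← norm_pow, ← norm_mul, h1, norm_one]
    have h3 : ‖q‖ ^ n ≤ 1 := pow_le_one₀ (norm_nonneg _) hq.le
    nlinarith [norm_nonneg z, norm_nonneg q]

lemma poch_succ (z : 𝕜) {q : 𝕜} (hq : ‖q‖ < 1) : poch z q = (1 - z) * poch (z * q) q := by
  have h := (hasProd_poch (z * q) hq).congr_fun (g := fun n : ℕ => 1 - z * q ^ (n + 1))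
    (fun n => by ring)
  have h2 := HasProd.zero_mul (f := fun n : ℕ => 1 - z * q ^ n) h
  simpa using (hasProd_poch z hq).unique h2

lemma poch_one {q : 𝕜} (hq : ‖q‖ < 1) : poch 1 q = 0 := by
  rw [poch_succ 1 hq]; ring

/-- Sorting the factors of `(z; q)_∞` by the residue of their index modulo `k`. -/
lemma poch_split (k : ℕ) [NeZero k] (z : 𝕜) {q : 𝕜} (hq : ‖q‖ < 1) :
    poch z q = ∏ r : Fin k, poch (z * q ^ (r : ℕ)) (q ^ k) := by
  have hk : ‖q ^ k‖ < 1 := by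
    rw [norm_pow]; exact pow_lt_one₀ (norm_nonneg _) hq (NeZero.ne k)
  have h1 := (Nat.divModEquiv k).symm.hasProd_iff.mpr (hasProd_poch z hq)
  have h2 := h1.prod_fiberwise (fun m => hasProd_fintype _)
  have h3 := hasProd_prod (s := (Finset.univ : Finset (Fin k)))
    (fun r _ => hasProd_poch (z * q ^ (r : ℕ)) hk)
  refine h2.unique (h3.congr_fun fun m => ?_)
  refine Finset.prod_congr rfl fun r _ => ?_
  simp only [Function.comp, Nat.divModEquiv_symm_apply]
  ring

/-! ### The Jacobi triple product -/

/-- `jt q z n = (-1)ⁿ q^{n(n-1)/2} zⁿ` is the general term of the Jacobi theta series. -/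
noncomputable def jt (q z : 𝕜) (n : ℤ) : 𝕜 := (-1) ^ n * q ^ (n * (n - 1) / 2) * z ^ n

omit [CompleteSpace 𝕜] in
lemma jt_succ {q z : 𝕜} (hq : q ≠ 0) (hz : z ≠ 0) (n : ℤ) :
    jt q z (n + 1) = -(z * q ^ n) * jt q z n := by
  have h : (n + 1) * (n + 1 - 1) / 2 = n * (n - 1) / 2 + n := by
    rw [show (n + 1) * (n + 1 - 1) = n * (n - 1) + n * 2 by ring,
      Int.add_mul_ediv_right _ _ two_ne_zero]
  unfold jt
  rw [h, zpow_add₀ hq, zpow_add_one₀ hz, zpow_add_one₀ (by simp)]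
  ring

omit [CompleteSpace 𝕜] in
lemma jt_neg {q z : 𝕜} (hq : q ≠ 0) (n : ℤ) : jt q z (-n) = jt q (q / z) n := by
  have h : -n * (-n - 1) / 2 = n * (n - 1) / 2 + n := by
    rw [show -n * (-n - 1) = n * (n - 1) + n * 2 by ring,
      Int.add_mul_ediv_right _ _ two_ne_zero]
  unfold jt
  rw [h, zpow_add₀ hq, div_zpow, zpow_neg z, zpow_neg, ← inv_zpow, inv_neg_one]
  ring

omit [CompleteSpace 𝕜] in
lemma summable_norm_jt_nat {q z : 𝕜} (hq0 : q ≠ 0) (hq : ‖q‖ < 1) (hz : z ≠ 0) :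
    Summable fun n : ℕ => ‖jt q z n‖ := by
  refine summable_of_ratio_test_tendsto_lt_one (l := 0) zero_lt_one
    (Eventually.of_forall fun n => ?_) ?_
  · simp [jt, hq0, hz, zpow_ne_zero]
  · have h0 (n : ℕ) : jt q z n ≠ 0 := by simp [jt, hq0, hz, zpow_ne_zero]
    have h (n : ℕ) : ‖‖jt q z ((n + 1 : ℕ) : ℤ)‖‖ / ‖‖jt q z n‖‖ = ‖z‖ * ‖q‖ ^ n := by
      rw [Nat.cast_add_one, jt_succ hq0 hz, norm_norm, norm_norm, norm_mul, norm_neg, norm_mul,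
        zpow_natCast, norm_pow, mul_div_assoc, div_self (norm_ne_zero_iff.mpr (h0 n)), mul_one]
    simp only [h]
    simpa using (tendsto_pow_atTop_nhds_zero_of_lt_one (norm_nonneg q) hq).const_mul ‖z‖

omit [CompleteSpace 𝕜] in
lemma summable_norm_jt {q z : 𝕜} (hq0 : q ≠ 0) (hq : ‖q‖ < 1) (hz : z ≠ 0) :
    Summable fun n : ℤ => ‖jt q z n‖ := by
  refine Summable.of_nat_of_neg (summable_norm_jt_nat hq0 hq hz) ?_
  simp only [jt_neg hq0]
  exact summable_norm_jt_nat hq0 hq (div_ne_zero hq0 hz)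

/-- `1 / (q; q)_m`, extended by `0` to negative `m`; with this convention the `q`-binomial
coefficient `[2N, N+n]` is `(q; q)_{2N}` times `qfacInv q (N + n) * qfacInv q (N - n)` for every
integer `n`. -/
noncomputable def qfacInv (q : 𝕜) (m : ℤ) : 𝕜 :=
  if m < 0 then 0 else (∏ k ∈ Finset.range m.toNat, (1 - q * q ^ k))⁻¹

omit [CompleteSpace 𝕜] in
lemma one_sub_ne_zero {q : 𝕜} (hq : ‖q‖ < 1) (k : ℕ) : 1 - q * q ^ k ≠ 0 := by
  intro h0
  have h1 : q ^ (k + 1) = 1 := by linear_combination -h0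
  have h2 : ‖q‖ ^ (k + 1) = 1 := by rw [← norm_pow, h1, norm_one]
  exact absurd h2 (pow_lt_one₀ (norm_nonneg _) hq (Nat.succ_ne_zero k)).ne

omit [CompleteSpace 𝕜] in
lemma qfacInv_sub_one {q : 𝕜} (hq : ‖q‖ < 1) (m : ℤ) :
    qfacInv q (m - 1) = (1 - q ^ m) * qfacInv q m := by
  rcases lt_trichotomy m 0 with h | rfl | h
  · simp [qfacInv, h, show m < 1 by omega]
  · simp [qfacInv]
  · obtain ⟨k, rfl⟩ : ∃ k : ℕ, m = k + 1 := ⟨(m - 1).toNat, by omega⟩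
    have h1 : ((k : ℤ) + 1).toNat = k + 1 := by omega
    have h2 : ¬ ((k : ℤ) + 1 < 0) := by omega
    have h3 := one_sub_ne_zero hq k
    have h4 : q ^ ((k : ℤ) + 1) = q * q ^ k := by
      rw [← Nat.cast_add_one, zpow_natCast, pow_succ']
    simp only [qfacInv, add_sub_cancel_right, h1, h2, if_false, Finset.prod_range_succ, h4,
      Int.toNat_natCast, mul_inv, show ¬ ((k : ℤ) < 0) by omega]
    field_simp

omit [CompleteSpace 𝕜] in
/-- The finite form of the Jacobi triple product identity. In the induction on `N`, the factor
`(1 - z q^N) (1 - q^{N+1} / z)` combines the coefficients at `n - 1`, `n` and `n + 1`. -/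
lemma hasSum_finite_jtp {q z : 𝕜} (hq0 : q ≠ 0) (hq : ‖q‖ < 1) (hz : z ≠ 0) (N : ℕ) :
    HasSum (fun n : ℤ => (∏ k ∈ Finset.range (2 * N), (1 - q * q ^ k)) *
        (qfacInv q (N + n) * qfacInv q (N - n)) * jt q z n)
      (∏ k ∈ Finset.range N, ((1 - z * q ^ k) * (1 - q / z * q ^ k))) := by
  induction N with
  | zero =>
    have h := hasSum_single (f := fun n : ℤ => (∏ k ∈ Finset.range (2 * 0), (1 - q * q ^ k)) *
        (qfacInv q ((0 : ℕ) + n) * qfacInv q ((0 : ℕ) - n)) * jt q z n) 0 (fun n hn => ?_)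
    · simpa [qfacInv, jt] using h
    · rcases lt_or_gt_of_ne hn with h | h <;> simp [qfacInv, h]
  | succ N ih =>
    have h1 := (Equiv.addRight (-1 : ℤ)).hasSum_iff.mpr ih
    have h2 := (Equiv.addRight (1 : ℤ)).hasSum_iff.mpr ih
    have h := ((ih.mul_left (1 + q ^ (2 * N + 1))).add (h1.mul_left (-(z * q ^ N)))).add
      (h2.mul_left (-(q / z * q ^ N)))
    rw [Finset.prod_range_succ]
    have e : ∀ A : 𝕜, A * ((1 - z * q ^ N) * (1 - q / z * q ^ N)) =
        (1 + q ^ (2 * N + 1)) * A + -(z * q ^ N) * A + -(q / z * q ^ N) * A := by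
      intro A; field_simp; ring
    rw [e]
    refine h.congr_fun fun n => ?_
    simp only [Function.comp, Equiv.coe_addRight]
    -- every term is expressed through `jt q z n` and the values of `qfacInv` at `N + 1 ± n`
    have j1 : jt q z (n + 1) = -(z * q ^ n) * jt q z n := jt_succ hq0 hz n
    have j2 : jt q z (n + -1) = -(z⁻¹ * q * (q ^ n)⁻¹) * jt q z n := by
      have := jt_succ hq0 hz (n + -1)
      rw [neg_add_cancel_right, zpow_add₀ hq0] at this
      rw [this]; field_simp
    have a1 := qfacInv_sub_one hq (N + 1 + n)
    have a2 := qfacInv_sub_one hq (N + n)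
    have a3 := qfacInv_sub_one hq (N + 1 - n)
    have a4 := qfacInv_sub_one hq (N - n)
    rw [show (N : ℤ) + 1 + n - 1 = N + n by ring] at a1
    rw [show (N : ℤ) + 1 - n - 1 = N - n by ring] at a3
    rw [show (N : ℤ) + (n + 1) = N + 1 + n by ring, show (N : ℤ) - (n + 1) = N - n - 1 by ring,
      show (N : ℤ) + (n + -1) = N + n - 1 by ring, show (N : ℤ) - (n + -1) = N + 1 - n by ring,
      Nat.cast_add_one, j1, j2, a2, a4, a1, a3, show 2 * (N + 1) = 2 * N + 1 + 1 by ring,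
      Finset.prod_range_succ, Finset.prod_range_succ]
    simp only [zpow_add₀ hq0, zpow_sub₀ hq0, zpow_natCast, zpow_one]
    have hqn : q ^ n ≠ 0 := zpow_ne_zero _ hq0
    generalize q ^ n = B at *
    field_simp
    ring

/-- **Jacobi triple product identity**, obtained from its finite form by dominated
convergence. -/
lemma hasSum_jt {q z : 𝕜} (hq0 : q ≠ 0) (hq : ‖q‖ < 1) (hz : z ≠ 0) :
    HasSum (jt q z) (poch q q * poch z q * poch (q / z) q) := by
  have hP : poch q q ≠ 0 := poch_ne_zero hq hq
  have hsum := summable_norm_jt hq0 hq hz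
  have tP := (hasProd_poch q hq).tendsto_prod_nat
  have t2 : Tendsto (fun N : ℕ => ∏ k ∈ Finset.range (2 * N), (1 - q * q ^ k)) atTop
      (𝓝 (poch q q)) := tP.comp (tendsto_id.const_mul_atTop' two_pos)
  have tinv := tP.inv₀ hP
  have tw (f : ℕ → ℤ) (hf : Tendsto f atTop atTop) :
      Tendsto (fun N => qfacInv q (f N)) atTop (𝓝 (poch q q)⁻¹) := by
    have h1 : Tendsto (fun N => (f N).toNat) atTop atTop :=
      (tendsto_atTop_atTop.mpr fun b => ⟨b, fun a ha => by omega⟩ :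
        Tendsto Int.toNat atTop atTop).comp hf
    refine (tinv.comp h1).congr' ?_
    filter_upwards [hf.eventually_ge_atTop 0] with N hN
    simp [qfacInv, not_lt.mpr hN]
  -- uniform bounds for the finite products and their inverses
  obtain ⟨C, hC⟩ := tP.norm.bddAbove_range
  obtain ⟨D, hD⟩ := tinv.norm.bddAbove_range
  have hC' (N : ℕ) : ‖∏ k ∈ Finset.range N, (1 - q * q ^ k)‖ ≤ C := hC ⟨N, rfl⟩
  have hD' (N : ℕ) : ‖(∏ k ∈ Finset.range N, (1 - q * q ^ k))⁻¹‖ ≤ D := hD ⟨N, rfl⟩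
  have hC0 : 0 ≤ C := (norm_nonneg _).trans (hC' 0)
  have hD0 : 0 ≤ D := (norm_nonneg _).trans (hD' 0)
  have hw (m : ℤ) : ‖qfacInv q m‖ ≤ D := by
    unfold qfacInv
    split_ifs
    · simpa using hD0
    · exact hD' _
  have key : Tendsto (fun N : ℕ => ∑' n : ℤ,
      (∏ k ∈ Finset.range (2 * N), (1 - q * q ^ k)) *
        (qfacInv q (N + n) * qfacInv q (N - n)) * jt q z n) atTop
      (𝓝 (∑' n : ℤ, poch q q * ((poch q q)⁻¹ * (poch q q)⁻¹) * jt q z n)) := by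
    refine tendsto_tsum_of_dominated_convergence (bound := fun n => C * (D * D) * ‖jt q z n‖)
      (hsum.mul_left _) (fun n => ?_) (Eventually.of_forall fun N n => ?_)
    · refine (t2.mul ((tw _ ?_).mul (tw _ ?_))).mul_const _
      · exact tendsto_atTop_add_const_right _ _ tendsto_natCast_atTop_atTop
      · exact tendsto_atTop_add_const_right _ (-n) tendsto_natCast_atTop_atTop
    · rw [norm_mul, norm_mul, norm_mul]
      gcongr
      · exact hC' _
      · exact hw _
      · exact hw _
  have key2 : Tendsto (fun N : ℕ => ∏ k ∈ Finset.range N, ((1 - z * q ^ k) * (1 - q / z * q ^ k)))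
      atTop (𝓝 (poch z q * poch (q / z) q)) := by
    simp only [Finset.prod_mul_distrib]
    exact (hasProd_poch z hq).tendsto_prod_nat.mul (hasProd_poch _ hq).tendsto_prod_nat
  simp only [(hasSum_finite_jtp hq0 hq hz _).tsum_eq] at key
  have e := tendsto_nhds_unique key2 key
  rw [tsum_mul_left] at e
  rw [mul_assoc, e]
  have e2 : poch q q * (poch q q * ((poch q q)⁻¹ * (poch q q)⁻¹) * ∑' n : ℤ, jt q z n) =
      ∑' n : ℤ, jt q z n := by field_simp
  rw [e2]
  exact hsum.of_norm.hasSum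

end Poch

/-! ### The five-dissection and the product over conjugates -/

section Dissection

lemma one_add_roots {ζ : ℂ} (hζ : IsPrimitiveRoot ζ 5) : 1 + ζ + ζ ^ 2 + ζ ^ 3 + ζ ^ 4 = 0 := by
  have h := hζ.geom_sum_eq_zero (by norm_num)
  simpa [Finset.sum_range_succ] using h

lemma prod_roots {ζ : ℂ} (hζ : IsPrimitiveRoot ζ 5) (a b : ℂ) :
    ∏ k ∈ Finset.range 5, (a - ζ ^ k * b) = a ^ 5 - b ^ 5 := by
  have h1 := one_add_roots hζ
  have h5 := hζ.pow_eq_one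
  have e1 : (a - ζ * b) * (a - ζ ^ 4 * b) = a ^ 2 - (ζ + ζ ^ 4) * a * b + b ^ 2 := by
    linear_combination b ^ 2 * h5
  have e2 : (a - ζ ^ 2 * b) * (a - ζ ^ 3 * b) = a ^ 2 + (1 + ζ + ζ ^ 4) * a * b + b ^ 2 := by
    linear_combination b ^ 2 * h5 - a * b * h1
  have e3 : (ζ + ζ ^ 4) ^ 2 = 1 - (ζ + ζ ^ 4) := by
    linear_combination h1 + (2 + ζ ^ 3) * h5
  simp only [Finset.prod_range_succ, Finset.prod_range_zero, one_mul, pow_zero, pow_one]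
  rw [show (a - b) * (a - ζ * b) * (a - ζ ^ 2 * b) * (a - ζ ^ 3 * b) * (a - ζ ^ 4 * b) =
    (a - b) * ((a - ζ * b) * (a - ζ ^ 4 * b)) * ((a - ζ ^ 2 * b) * (a - ζ ^ 3 * b)) by ring, e1, e2]
  linear_combination -(a - b) * a ^ 2 * b ^ 2 * e3

lemma poch_roots {ζ : ℂ} (hζ : IsPrimitiveRoot ζ 5) (z : ℂ) {q : ℂ} (hq : ‖q‖ < 1) :
    ∏ k ∈ Finset.range 5, poch (ζ ^ k * z) q = poch (z ^ 5) (q ^ 5) := by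
  have hq5 : ‖q ^ 5‖ < 1 := by
    rw [norm_pow]; exact pow_lt_one₀ (norm_nonneg _) hq (by norm_num)
  have h := hasProd_prod (s := Finset.range 5) (fun k _ => hasProd_poch (ζ ^ k * z) hq)
  refine h.unique ((hasProd_poch (z ^ 5) hq5).congr_fun fun n => ?_)
  have := prod_roots hζ 1 (z * q ^ n)
  simp only [← mul_assoc] at this
  rw [this]; ring

/-- The theta series `∑ (-1)ⁿ x^{n(5n-1)/2}` in its product form `(x², x³, x⁵; x⁵)_∞`. It is the
denominator in `R(x) = x^{1/5} thetaQ x / thetaP x`. -/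
noncomputable def thetaP {𝕜 : Type*} [NormedField 𝕜] (x : 𝕜) : 𝕜 :=
  poch (x ^ 5) (x ^ 5) * poch (x ^ 2) (x ^ 5) * poch (x ^ 3) (x ^ 5)

/-- The theta series `∑ (-1)ⁿ x^{n(5n-3)/2}` in its product form `(x, x⁴, x⁵; x⁵)_∞`. It is the
numerator in `R(x) = x^{1/5} thetaQ x / thetaP x`. -/
noncomputable def thetaQ {𝕜 : Type*} [NormedField 𝕜] (x : 𝕜) : 𝕜 :=
  poch (x ^ 5) (x ^ 5) * poch x (x ^ 5) * poch (x ^ 4) (x ^ 5)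

/-- At a fifth root of unity, the terms of the theta series with index `≡ r - 2` modulo `5` form
a theta series of base `q²⁵`. -/
lemma jt_dissect {q ω : ℂ} (hq0 : q ≠ 0) (hω : IsPrimitiveRoot ω 5) (m : ℤ) (r : ℕ) :
    jt q ω (5 * m + r - 2) = jt q ω (r - 2) * jt ((q ^ 5) ^ 5) ((q ^ 5) ^ r) m := by
  have hω0 : ω ≠ 0 := hω.ne_zero (by norm_num)
  have e : (5 * m + r - 2) * (5 * m + r - 2 - 1) / 2 =
      ((r : ℤ) - 2) * (r - 2 - 1) / 2 + (25 * (m * (m - 1) / 2) + 5 * r * m) := by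
    have h1 : (2 : ℤ) ∣ m * (m - 1) := (Int.even_mul_pred_self m).two_dvd
    obtain ⟨c, hc⟩ := h1
    rw [hc, Int.mul_ediv_cancel_left _ two_ne_zero, ← Int.add_mul_ediv_right _ _ two_ne_zero]
    congr 1
    linear_combination 25 * hc
  unfold jt
  rw [e, show 5 * m + (r : ℤ) - 2 = (r - 2) + 5 * m by ring, zpow_add₀ hω0, zpow_add₀ hq0,
    zpow_add₀ (by norm_num : (-1 : ℂ) ≠ 0), zpow_mul (-1 : ℂ), zpow_mul ω, zpow_add₀ hq0]
  have hω5 : ω ^ (5 : ℤ) = 1 := by exact_mod_cast hω.pow_eq_one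
  have h25 (c : ℤ) : ((q ^ 5) ^ 5) ^ c = q ^ (25 * c) := by
    rw [← pow_mul, ← zpow_natCast, ← zpow_mul]; norm_num
  have h5r : ((q ^ 5) ^ r) ^ m = q ^ (5 * (r : ℤ) * m) := by
    rw [← pow_mul, ← zpow_natCast, ← zpow_mul]; norm_num
  rw [hω5, one_zpow, h25, h5r, show (-1 : ℂ) ^ (5 : ℤ) = -1 by norm_num]
  ring

/-- Five-dissection of the theta series at a primitive fifth root of unity `ω`. The class of
indices `≡ -2` modulo `5` contributes `0`; the classes `0` and `1` combine into
`(1 - ω) thetaP (q⁵)`, and the classes `-1` and `2` into `(1 - ω) (ω² + ω³) q thetaQ (q⁵)`. -/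
lemma dissection {q ω : ℂ} (hq0 : q ≠ 0) (hq : ‖q‖ < 1) (hω : IsPrimitiveRoot ω 5) :
    poch q q * poch (ω * q) q * poch (ω ^ 4 * q) q =
      thetaP (q ^ 5) + (ω ^ 2 + ω ^ 3) * q * thetaQ (q ^ 5) := by
  have hω0 : ω ≠ 0 := hω.ne_zero (by norm_num)
  have hω5 : ω ^ 5 = 1 := hω.pow_eq_one
  have hω1 : 1 - ω ≠ 0 := sub_ne_zero.mpr (hω.ne_one (by norm_num)).symm
  set x := q ^ 5 with hx
  have hx0 : x ≠ 0 := pow_ne_zero _ hq0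
  have hx1 : ‖x ^ 5‖ < 1 := by
    rw [hx, ← pow_mul, norm_pow]; exact pow_lt_one₀ (norm_nonneg _) hq (by norm_num)
  have hJ (r : ℕ) := hasSum_jt (pow_ne_zero 5 hx0) hx1 (pow_ne_zero r hx0)
  have h1 := (Equiv.addRight (-2 : ℤ)).hasSum_iff.mpr (hasSum_jt hq0 hq hω0)
  have h2 := ((Int.divModEquiv 5).symm.hasSum_iff.mpr h1).prod_fiberwise
    (fun m => hasSum_fintype _)
  have h3 := hasSum_sum (s := (Finset.univ : Finset (Fin 5)))
    (fun r _ => (hJ (r : ℕ)).mul_left (jt q ω ((r : ℕ) - 2)))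
  -- both sums are indexed by pairs `(m, r)` standing for the index `5 m + r - 2`
  have h4 := h2.unique (h3.congr_fun fun m => Finset.sum_congr rfl fun r _ => by
    rw [hx, ← jt_dissect hq0 hω]
    simp only [Function.comp, Int.divModEquiv_symm_apply, Equiv.coe_addRight]
    congr 1
    push_cast
    ring)
  rw [poch_succ ω hq, show q / ω = ω ^ 4 * q by
    rw [div_eq_iff hω0]; linear_combination -q * hω5] at h4
  have i1 : ω⁻¹ = ω ^ 4 := by field_simp; exact hω5.symm
  simp only [Fin.sum_univ_five, Fin.val_zero, Fin.val_one, Fin.val_two, pow_zero,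
    show ((3 : Fin 5) : ℕ) = 3 from rfl, show ((4 : Fin 5) : ℕ) = 4 from rfl] at h4
  have d1 : x ^ 5 / x ^ 1 = x ^ 4 := by field_simp
  have d2 : x ^ 5 / x ^ 2 = x ^ 3 := by field_simp
  have d3 : x ^ 5 / x ^ 3 = x ^ 2 := by field_simp
  have d4 : x ^ 5 / x ^ 4 = x := by field_simp
  have j1 : jt q ω (((1 : ℕ) : ℤ) - 2) = -(ω ^ 4 * q) := by
    simp [jt, i1, mul_comm]
  have j2 : jt q ω (((2 : ℕ) : ℤ) - 2) = 1 := by simp [jt]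
  have j3 : jt q ω (((3 : ℕ) : ℤ) - 2) = -ω := by simp [jt]
  have j4 : jt q ω (((4 : ℕ) : ℤ) - 2) = ω ^ 2 * q := by
    simp [jt]; rw [mul_comm]
  rw [d1, d2, d3, d4, j1, j2, j3, j4, poch_one hx1, pow_one] at h4
  apply mul_left_cancel₀ hω1
  unfold thetaP thetaQ
  linear_combination h4

/-- The product of `(η yₖ; yₖ)_∞` over the five conjugates `yₖ = ζᵏ y`, for `η⁵ = 1`. The factors
of each symbol are sorted by the residue of their index modulo `5`, which turns the base `yₖ` into
`y⁵`; the product over `k` then collapses by `poch_roots` in the four nonzero exponent classes, and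
is a fifth power in the remaining one. -/
lemma poch_conj {ζ η y : ℂ} (hζ : IsPrimitiveRoot ζ 5) (hη : η ^ 5 = 1) (hy : ‖y‖ < 1) :
    ∏ k ∈ Finset.range 5, poch (η * (ζ ^ k * y)) (ζ ^ k * y) =
      (poch (y ^ 5) ((y ^ 5) ^ 5) * poch ((y ^ 5) ^ 2) ((y ^ 5) ^ 5) *
        poch ((y ^ 5) ^ 3) ((y ^ 5) ^ 5) * poch ((y ^ 5) ^ 4) ((y ^ 5) ^ 5)) *
        poch (η * y ^ 5) (y ^ 5) ^ 5 := by
  have hn : ‖ζ‖ = 1 := hζ.norm'_eq_one (by norm_num)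
  have h5 := hζ.pow_eq_one
  have hk (k : ℕ) : ‖ζ ^ k * y‖ < 1 := by simpa [hn] using hy
  have hx : ‖y ^ 5‖ < 1 := by
    rw [norm_pow]; exact pow_lt_one₀ (norm_nonneg _) hy (by norm_num)
  have hp (k : ℕ) : (ζ ^ k * y) ^ 5 = y ^ 5 := by
    rw [mul_pow, ← pow_mul, mul_comm k, pow_mul, h5, one_pow, one_mul]
  have e (k : ℕ) : poch (η * (ζ ^ k * y)) (ζ ^ k * y) =
      poch ((ζ ^ 1) ^ k * (η * y)) (y ^ 5) * poch ((ζ ^ 2) ^ k * (η * y ^ 2)) (y ^ 5) *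
      poch ((ζ ^ 3) ^ k * (η * y ^ 3)) (y ^ 5) * poch ((ζ ^ 4) ^ k * (η * y ^ 4)) (y ^ 5) *
      poch (η * y ^ 5) (y ^ 5) := by
    rw [poch_split 5 _ (hk k), hp]
    simp only [Fin.prod_univ_five, Fin.val_zero, Fin.val_one, Fin.val_two,
      show ((3 : Fin 5) : ℕ) = 3 from rfl, show ((4 : Fin 5) : ℕ) = 4 from rfl]
    rw [show η * y ^ 5 = η * (ζ ^ k * y) ^ 5 by rw [hp]]
    ring_nf
  have hr (r : ℕ) (hr : r.Coprime 5) := poch_roots (hζ.pow_of_coprime r hr) (η * y ^ r) hx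
  have s1 := hr 1 (by norm_num)
  rw [pow_one y] at s1
  simp only [e, Finset.prod_mul_distrib, hr 2 (by norm_num), hr 3 (by norm_num),
    hr 4 (by norm_num), s1, Finset.prod_const, Finset.card_range, mul_pow η, hη, one_mul]
  ring_nf

/-- The product of `dissection` over the five conjugates `ωᵏ y` of `y`. The right side collapses
because `∏ (a - ωᵏ b) = a⁵ - b⁵`. -/
lemma fifth_power_identity {ω y : ℂ} (hy0 : y ≠ 0) (hy : ‖y‖ < 1) (hω : IsPrimitiveRoot ω 5) :
    (poch (y ^ 5) ((y ^ 5) ^ 5) * poch ((y ^ 5) ^ 2) ((y ^ 5) ^ 5) *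
        poch ((y ^ 5) ^ 3) ((y ^ 5) ^ 5) * poch ((y ^ 5) ^ 4) ((y ^ 5) ^ 5)) ^ 3 *
      (poch (y ^ 5) (y ^ 5) * poch (ω * y ^ 5) (y ^ 5) * poch (ω ^ 4 * y ^ 5) (y ^ 5)) ^ 5 =
      thetaP (y ^ 5) ^ 5 + (ω ^ 2 + ω ^ 3) ^ 5 * y ^ 5 * thetaQ (y ^ 5) ^ 5 := by
  have hn : ‖ω‖ = 1 := hω.norm'_eq_one (by norm_num)
  have hω0 : ω ≠ 0 := hω.ne_zero (by norm_num)
  have h5 := hω.pow_eq_one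
  have hk (k : ℕ) : ‖ω ^ k * y‖ < 1 := by simpa [hn] using hy
  have hp (k : ℕ) : (ω ^ k * y) ^ 5 = y ^ 5 := by
    rw [mul_pow, ← pow_mul, mul_comm k, pow_mul, h5, one_pow, one_mul]
  have h := prod_roots hω (thetaP (y ^ 5)) (-((ω ^ 2 + ω ^ 3) * y * thetaQ (y ^ 5)))
  have e (k : ℕ) : thetaP (y ^ 5) - ω ^ k * (-((ω ^ 2 + ω ^ 3) * y * thetaQ (y ^ 5))) =
      poch (1 * (ω ^ k * y)) (ω ^ k * y) * poch (ω * (ω ^ k * y)) (ω ^ k * y) *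
        poch (ω ^ 4 * (ω ^ k * y)) (ω ^ k * y) := by
    rw [one_mul, dissection (mul_ne_zero (pow_ne_zero k hω0) hy0) (hk k) hω, hp]
    ring
  have h45 : (ω ^ 4) ^ 5 = 1 := by rw [← pow_mul, mul_comm, pow_mul, h5, one_pow]
  simp only [e, Finset.prod_mul_distrib, poch_conj hω (one_pow 5) hy, poch_conj hω h5 hy,
    poch_conj hω h45 hy] at h
  simp only [one_mul] at h
  linear_combination h

end Dissection

/-! ### Specialization to real `q` -/

section RealValues

lemma ofReal_poch (z : ℝ) {q : ℝ} (hq : ‖q‖ < 1) :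
    ((poch z q : ℝ) : ℂ) = poch (z : ℂ) (q : ℂ) := by
  have hq' : ‖(q : ℂ)‖ < 1 := by simpa using hq
  have h := (hasProd_poch z hq).map Complex.ofRealHom Complex.continuous_ofReal
  refine h.unique ((hasProd_poch (z : ℂ) hq').congr_fun fun n => ?_)
  simp

lemma poch_pos {z q : ℝ} (hq0 : 0 < q) (hq : q < 1) (hz0 : 0 < z) (hz : z < 1) :
    0 < poch z q := by
  have hq' : ‖q‖ < 1 := by rwa [Real.norm_of_nonneg hq0.le]
  have hz' : ‖z‖ < 1 := by rwa [Real.norm_of_nonneg hz0.le]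
  refine lt_of_le_of_ne ?_ (poch_ne_zero hq' hz').symm
  refine ge_of_tendsto' (hasProd_poch z hq').tendsto_prod_nat fun N => ?_
  refine Finset.prod_nonneg fun n _ => ?_
  nlinarith [pow_le_one₀ (n := n) hq0.le hq.le, pow_pos hq0 n]

/-- **Euler's pentagonal number theorem**, as the Jacobi triple product with base `q³` at
`z = q`. -/
lemma fneg_eq_poch {q : ℝ} (hq0 : 0 < q) (hq1 : q < 1) : fneg q = poch q q := by
  have hq : ‖q‖ < 1 := by rwa [Real.norm_of_nonneg hq0.le]
  have hq3 : ‖q ^ 3‖ < 1 := by rw [norm_pow]; exact pow_lt_one₀ (norm_nonneg _) hq (by norm_num)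
  have h := hasSum_jt (pow_ne_zero 3 hq0.ne') hq3 hq0.ne'
  have e : (fun n : ℤ => (-1 : ℝ) ^ n * q ^ (n * (3 * n - 1) / 2)) = jt (q ^ 3) q := by
    funext n
    obtain ⟨c, hc⟩ : (2 : ℤ) ∣ n * (n - 1) := (Int.even_mul_pred_self n).two_dvd
    have e1 : n * (3 * n - 1) / 2 = 3 * (n * (n - 1) / 2) + n := by
      rw [hc, Int.mul_ediv_cancel_left _ two_ne_zero,
        show n * (3 * n - 1) = 2 * (3 * c + n) by linear_combination 3 * hc,
        Int.mul_ediv_cancel_left _ two_ne_zero]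
    rw [jt, e1, zpow_add₀ hq0.ne', zpow_mul]
    norm_cast
    ring
  rw [fneg, e, h.tsum_eq, poch_split 3 q hq]
  simp only [Fin.prod_univ_three, Fin.val_zero, Fin.val_one, Fin.val_two]
  rw [show q ^ 3 / q = q * q ^ 1 by field_simp, show q ^ 3 = q * q ^ 2 by ring, pow_zero, mul_one]
  ring

lemma rrcf_eq {q : ℝ} (hq0 : 0 < q) (hq1 : q < 1) :
    rrcf q = q ^ ((1 : ℝ) / 5) * (thetaQ q / thetaP q) := by
  have hq : ‖q‖ < 1 := by rwa [Real.norm_of_nonneg hq0.le]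
  have hp (k : ℕ) (hk : k ≠ 0) : ‖q ^ k‖ < 1 := by
    rw [norm_pow]; exact pow_lt_one₀ (norm_nonneg _) hq hk
  have h5 := hp 5 (by norm_num)
  have n5 := poch_ne_zero h5 h5
  have n2 := poch_ne_zero h5 (hp 2 (by norm_num))
  have n3 := poch_ne_zero h5 (hp 3 (by norm_num))
  have h := ((hasProd_poch (q ^ 4) h5).mul (hasProd_poch q h5)).div₀
    ((hasProd_poch (q ^ 3) h5).mul (hasProd_poch (q ^ 2) h5)) (mul_ne_zero n3 n2)
  have e : (fun n : ℕ => (1 - q ^ (5*(n+1) - 1)) * (1 - q ^ (5*(n+1) - 4)) /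
      ((1 - q ^ (5*(n+1) - 2)) * (1 - q ^ (5*(n+1) - 3)))) =
      fun n : ℕ => (1 - q ^ 4 * (q ^ 5) ^ n) * (1 - q * (q ^ 5) ^ n) /
        ((1 - q ^ 3 * (q ^ 5) ^ n) * (1 - q ^ 2 * (q ^ 5) ^ n)) := by
    funext n
    rw [show 5 * (n + 1) - 1 = 4 + 5 * n by omega, show 5 * (n + 1) - 4 = 1 + 5 * n by omega,
      show 5 * (n + 1) - 2 = 3 + 5 * n by omega, show 5 * (n + 1) - 3 = 2 + 5 * n by omega]
    simp only [pow_add, pow_mul, pow_one]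
  rw [rrcf, e, h.tprod_eq, thetaP, thetaQ]
  field_simp

/-- A primitive fifth root of unity `ω` with `ω² + ω³ = -β`. -/
lemma exists_root : ∃ ω : ℂ, IsPrimitiveRoot ω 5 ∧ ω ^ 2 + ω ^ 3 = -(betaRR : ℂ) := by
  refine ⟨Complex.exp (2 * π * Complex.I / (5 : ℕ)), Complex.isPrimitiveRoot_exp 5 (by norm_num), ?_⟩
  set ω := Complex.exp (2 * π * Complex.I / (5 : ℕ)) with hω
  have hp : IsPrimitiveRoot ω 5 := Complex.isPrimitiveRoot_exp 5 (by norm_num)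
  have h5 := hp.pow_eq_one
  have h2 : ω ^ 2 = Complex.exp ((4 * π / 5 : ℝ) * Complex.I) := by
    rw [hω, ← Complex.exp_nat_mul]; congr 1; push_cast; ring
  have h3 : ω ^ 3 = Complex.exp (-((4 * π / 5 : ℝ) * Complex.I)) := by
    rw [Complex.exp_neg, ← h2]
    exact eq_inv_of_mul_eq_one_left (by linear_combination h5)
  have hc : Real.cos (4 * π / 5) = -(1 + √5) / 4 := by
    rw [show 4 * π / 5 = π - π / 5 by ring, Real.cos_pi_sub, Real.cos_pi_div_five]; ring
  have h := Complex.two_cos ((4 * π / 5 : ℝ) : ℂ)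
  rw [h2, h3, ← neg_mul, ← h, ← Complex.ofReal_cos, hc, betaRR]
  push_cast
  ring

/-- The product `∏_{n ≥ 1} (1 + β qⁿ + q²ⁿ)`. -/
noncomputable def betaProd (q : ℝ) : ℝ := ∏' n : ℕ, (1 + betaRR * q ^ (n + 1) + q ^ (2 * (n + 1)))

lemma hasProd_betaProd {q : ℝ} (hq0 : 0 < q) (hq1 : q < 1) :
    HasProd (fun n : ℕ => 1 + betaRR * q ^ (n + 1) + q ^ (2 * (n + 1))) (betaProd q) := by
  have h1 : Summable fun n : ℕ => q ^ (n + 1) :=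
    (summable_nat_add_iff 1).mpr (summable_geometric_of_lt_one hq0.le hq1)
  have h2 : Summable fun n : ℕ => q ^ (2 * (n + 1)) := by
    simp only [pow_mul]
    exact (summable_nat_add_iff 1).mpr
      (summable_geometric_of_lt_one (by positivity) (by nlinarith : q ^ 2 < 1))
  have h := (Real.multipliable_one_add_of_summable ((h1.mul_left betaRR).add h2)).hasProd
  simp only [← add_assoc] at h
  exact h

/-- The factors of `betaProd` are `1 + β qⁿ + q²ⁿ = (1 - ω² qⁿ) (1 - ω³ qⁿ)`. -/
lemma ofReal_betaProd {q : ℝ} (hq0 : 0 < q) (hq1 : q < 1) {ω : ℂ} (hω : IsPrimitiveRoot ω 5)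
    (hb : ω ^ 2 + ω ^ 3 = -(betaRR : ℂ)) :
    (betaProd q : ℂ) = poch (ω ^ 2 * q) (q : ℂ) * poch (ω ^ 3 * q) (q : ℂ) := by
  have hq' : ‖(q : ℂ)‖ < 1 := by simpa [abs_of_pos hq0] using hq1
  have h := (hasProd_betaProd hq0 hq1).map Complex.ofRealHom Complex.continuous_ofReal
  refine h.unique (((hasProd_poch (ω ^ 2 * q) hq').mul
    (hasProd_poch (ω ^ 3 * q) hq')).congr_fun fun n => ?_)
  have hb' : (betaRR : ℂ) = -(ω ^ 2 + ω ^ 3) := by rw [hb]; ring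
  simp only [Function.comp, Complex.ofRealHom_eq_coe, Complex.ofReal_add, Complex.ofReal_mul,
    Complex.ofReal_one, Complex.ofReal_pow, hb', pow_add, pow_mul, mul_add]
  linear_combination -((q : ℂ) ^ 2 * ((q : ℂ) ^ n) ^ 2) * hω.pow_eq_one

/-- `fifth_power_identity` at `y = q^{1/5}` and `ω² + ω³ = -β`, multiplied by `betaProd q ^ 5` to
clear the complex symbols `(ω q; q)_∞ (ω⁴ q; q)_∞`. -/
lemma real_identity {q : ℝ} (hq0 : 0 < q) (hq1 : q < 1) :
    poch q q ^ 3 * poch (q ^ 5) (q ^ 5) ^ 2 =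
      betaProd q ^ 5 * (thetaP q ^ 5 - betaRR ^ 5 * q * thetaQ q ^ 5) := by
  obtain ⟨ω, hω, hb⟩ := exists_root
  set y : ℝ := q ^ ((1 : ℝ) / 5) with hy
  have hy5 : y ^ 5 = q := by
    rw [hy, ← Real.rpow_natCast, ← Real.rpow_mul hq0.le]; norm_num
  have hy0 : 0 < y := Real.rpow_pos_of_pos hq0 _
  have hy1 : y < 1 := Real.rpow_lt_one hq0.le hq1 (by norm_num)
  have hyc : (y : ℂ) ^ 5 = q := by rw [← hy5]; push_cast; rfl
  have hq : ‖q‖ < 1 := by rwa [Real.norm_of_nonneg hq0.le]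
  have hqc : ‖(q : ℂ)‖ < 1 := by simpa using hq
  have hq5 : ‖q ^ 5‖ < 1 := by rw [norm_pow]; exact pow_lt_one₀ (norm_nonneg _) hq (by norm_num)
  have main := fifth_power_identity (y := (y : ℂ)) (by exact_mod_cast hy0.ne')
    (by simpa [abs_of_pos hy0] using hy1) hω
  have hprod := poch_roots hω q hqc
  have hsplit := poch_split 5 q hq
  simp only [Fin.prod_univ_five, Fin.val_zero, Fin.val_one, Fin.val_two,
      show ((3 : Fin 5) : ℕ) = 3 from rfl, show ((4 : Fin 5) : ℕ) = 4 from rfl,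
      ← pow_succ', zero_add, Nat.reduceAdd] at hsplit
  simp only [pow_one] at hsplit
  simp only [Finset.prod_range_succ, Finset.prod_range_zero, one_mul, pow_zero, pow_one] at hprod
  have hB := ofReal_betaProd hq0 hq1 hω hb
  rw [hyc, hb] at main
  -- the complex identity, multiplied by `betaProd ^ 5`, has only real ingredients
  have hreal : (poch q (q ^ 5) * poch (q ^ 2) (q ^ 5) * poch (q ^ 3) (q ^ 5) *
      poch (q ^ 4) (q ^ 5)) ^ 3 * poch (q ^ 5) (q ^ 5) ^ 5 =
      betaProd q ^ 5 * (thetaP q ^ 5 - betaRR ^ 5 * q * thetaQ q ^ 5) := by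
    apply Complex.ofReal_injective
    unfold thetaP thetaQ at main ⊢
    push_cast [ofReal_poch _ hq5, ofReal_poch _ hq]
    have hE : poch ((q : ℂ) ^ 5) ((q : ℂ) ^ 5) ^ 5 =
        (poch (q : ℂ) q * poch (ω * q) (q : ℂ) * poch (ω ^ 4 * q) (q : ℂ)) ^ 5 *
          (poch (ω ^ 2 * q) (q : ℂ) * poch (ω ^ 3 * q) (q : ℂ)) ^ 5 := by
      rw [← hprod]; ring
    rw [hB]
    linear_combination
      (poch (ω ^ 2 * q) (q : ℂ) * poch (ω ^ 3 * q) (q : ℂ)) ^ 5 * main +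
      (poch (q : ℂ) (q ^ 5) * poch ((q : ℂ) ^ 2) (q ^ 5) * poch ((q : ℂ) ^ 3) (q ^ 5) *
        poch ((q : ℂ) ^ 4) (q ^ 5)) ^ 3 * hE
  rw [← hreal, hsplit]
  ring

end RealValues

theorem ramanujan_product_beta_fifth (q : ℝ) (hq0 : 0 < q) (hq1 : q < 1) :
    (1 / Real.sqrt (rrcf q))^5 - (betaRR * Real.sqrt (rrcf q))^5 =
      q ^ (-(1 : ℝ)/2) * Real.sqrt (fneg q / fneg (q^5)) *
        ∏' n : ℕ,
          1 / (1 + betaRR * q ^ (n + 1) + q ^ (2*(n + 1)))^5 := by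
  have hq5 : q ^ 5 < 1 := pow_lt_one₀ hq0.le hq1 (by norm_num)
  have hq : ‖q‖ < 1 := by rwa [Real.norm_of_nonneg hq0.le]
  have hpos (k : ℕ) (hk : k ≠ 0) : 0 < poch (q ^ k) (q ^ 5) :=
    poch_pos (by positivity) hq5 (by positivity) (pow_lt_one₀ hq0.le hq1 hk)
  have p1 := hpos 1 (by norm_num)
  have p2 := hpos 2 (by norm_num)
  have p3 := hpos 3 (by norm_num)
  have p4 := hpos 4 (by norm_num)
  have p5 := hpos 5 (by norm_num)
  rw [pow_one] at p1
  have pf := poch_pos hq0 hq1 hq0 hq1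
  have hP : 0 < thetaP q := by unfold thetaP; positivity
  have hQ : 0 < thetaQ q := by unfold thetaQ; positivity
  have hPQ : thetaP q * thetaQ q = poch q q * poch (q ^ 5) (q ^ 5) := by
    rw [poch_split 5 q hq, thetaP, thetaQ]
    simp only [Fin.prod_univ_five, Fin.val_zero, Fin.val_one, Fin.val_two,
      show ((3 : Fin 5) : ℕ) = 3 from rfl, show ((4 : Fin 5) : ℕ) = 4 from rfl,
      ← pow_succ', zero_add, Nat.reduceAdd]
    simp only [pow_one]
    ring
  have hB0 : betaProd q ≠ 0 := by
    have h1 : (1 : ℝ) ≤ betaProd q :=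
      ge_of_tendsto' (hasProd_betaProd hq0 hq1).tendsto_prod_nat fun N =>
        Finset.one_le_prod fun n _ => by
          have := betaRR_pos
          have : 0 < betaRR * q ^ (n + 1) := by positivity
          have : 0 < q ^ (2 * (n + 1)) := by positivity
          linarith
    positivity
  have hprod : ∏' n : ℕ, 1 / (1 + betaRR * q ^ (n + 1) + q ^ (2*(n + 1)))^5 =
      1 / betaProd q ^ 5 := by
    have h := (hasProd_prod (s := Finset.range 5) (fun _ _ => hasProd_betaProd hq0 hq1)).inv₀
      (by simpa using hB0)
    simp only [Finset.prod_const, Finset.card_range] at h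
    simpa only [one_div] using h.tprod_eq
  have hR := real_identity hq0 hq1
  rw [hprod, fneg_eq_poch hq0 hq1, fneg_eq_poch (by positivity) hq5]
  set y : ℝ := q ^ ((1 : ℝ) / 5) with hy
  have hy5 : y ^ 5 = q := by
    rw [hy, ← Real.rpow_natCast, ← Real.rpow_mul hq0.le]; norm_num
  have hy0 : 0 < y := Real.rpow_pos_of_pos hq0 _
  have ht : rrcf q = y * (thetaQ q / thetaP q) := rrcf_eq hq0 hq1
  have ht0 : 0 < rrcf q := by rw [ht]; positivity
  set s := √(rrcf q) with hs
  have hs0 : 0 < s := Real.sqrt_pos.mpr ht0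
  have hs2 : s ^ 2 = y * (thetaQ q / thetaP q) := by rw [hs, Real.sq_sqrt ht0.le, ht]
  clear_value s y
  have hsP : s ^ 2 * thetaP q = y * thetaQ q := by rw [hs2]; field_simp
  set f₁ := poch q q
  set f₅ := poch (q ^ 5) (q ^ 5)
  -- both sides of this identity are positive, so it can be checked after squaring
  have hroot : f₁ ^ 3 * f₅ ^ 2 / (s ^ 5 * thetaP q ^ 5) = q ^ (-(1 : ℝ)/2) * √(f₁ / f₅) := by
    have e1 : q ^ (-(1 : ℝ)/2) = √(1 / q) := by
      rw [Real.sqrt_eq_rpow, one_div, Real.inv_rpow hq0.le, ← Real.rpow_neg hq0.le]; norm_num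
    rw [e1, ← Real.sqrt_mul (by positivity)]
    symm
    rw [Real.sqrt_eq_iff_mul_self_eq (by positivity) (by positivity)]
    have e2 : s ^ 10 * thetaP q ^ 10 = q * (f₁ * f₅) ^ 5 := by
      calc s ^ 10 * thetaP q ^ 10 = (s ^ 2 * thetaP q) ^ 5 * thetaP q ^ 5 := by ring
        _ = y ^ 5 * (thetaP q * thetaQ q) ^ 5 := by rw [hsP]; ring
        _ = q * (f₁ * f₅) ^ 5 := by rw [hy5, hPQ]
    field_simp
    linear_combination e2
  rw [← hroot]
  have e3 : s ^ 10 * thetaP q ^ 5 = q * thetaQ q ^ 5 := by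
    calc s ^ 10 * thetaP q ^ 5 = (s ^ 2 * thetaP q) ^ 5 := by ring
      _ = y ^ 5 * thetaQ q ^ 5 := by rw [hsP]; ring
      _ = q * thetaQ q ^ 5 := by rw [hy5]
  field_simp
  rw [hR]
  linear_combination -betaProd q ^ 5 * betaRR ^ 5 * e3
end
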